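/- arXiv:1807.03536 — 3 statements merged into one kernel-verified Lean document; each statement's English description precedes it below -/
import Mathlib

section
/- Let Φ̊ ⊂ ℝⁿ be the root system of type B_n (n ≥ 2), let (Λ_α) be an extension datum of type (Φ̊, Y) with common values Λ_s on short and Λ_ℓ on long roots, assume Λ_ℓ is an additive subgroup of Y (automatic for n ≥ 3), and let Φ^re be the associated set of real roots. Then Ψ ⊆ Φ^re is a maximal closed subroot system whose gradient Gr(Ψ) is a semi-closed subroot system of Φ̊ if and only if there exist a proper nonempty subset J ⊆ {1, …, n} and nonempty disjoint subsets Z₁, Z₂ ⊆ Λ_s, each a union of cosets of Λ_ℓ, with Λ_s = Z₁ ∪ Z₂, such that Ψ = {±εᵢ ⊕ z : i ∉ J, z ∈ Z₁} ∪ {±εⱼ ⊕ z : j ∈ J, z ∈ Z₂} ∪ {(±ε_p ± ε_q) ⊕ y : p ≠ q, y ∈ Λ_ℓ, and either p, q ∉ J or p, q ∈ J}. -/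
open scoped RealInnerProductSpace Pointwise

noncomputable section

namespace BdS

variable {V Y : Type*} [NormedAddCommGroup V] [InnerProductSpace ℝ V]
variable [AddCommGroup Y] [Module ℝ Y]

/-- `pairing β α = (β, α∨) = 2(β,α)/(α,α)`. -/
def pairing (β α : V) : ℝ := 2 * ⟪β, α⟫ / ⟪α, α⟫

/-- `reflRoot α v = s_α(v) = v − (v, α∨)α`. -/
def reflRoot (α v : V) : V := v - pairing v α • α

/-- A (finite) root system in `V`. -/
def IsRootSystem (Φ : Set V) : Prop :=
  Φ.Finite ∧ (0 : V) ∉ Φ ∧ Submodule.span ℝ Φ = ⊤ ∧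
    (∀ α ∈ Φ, ∀ β ∈ Φ, reflRoot α β ∈ Φ) ∧
    ∀ α ∈ Φ, ∀ β ∈ Φ, ∃ m : ℤ, pairing β α = (m : ℝ)

def IsReduced (Φ : Set V) : Prop :=
  ∀ α ∈ Φ, ∀ c : ℝ, c • α ∈ Φ → c • α = α ∨ c • α = -α

def IsIrreducible (Φ : Set V) : Prop :=
  ∀ Φ₁ Φ₂ : Set V, Φ = Φ₁ ∪ Φ₂ → (∀ x ∈ Φ₁, ∀ y ∈ Φ₂, ⟪x, y⟫ = 0) →
    Φ₁ = ∅ ∨ Φ₂ = ∅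

/-- divisible roots -/
def divSet (Φ : Set V) : Set V := {α ∈ Φ | (2:ℝ)⁻¹ • α ∈ Φ}
/-- non-divisible roots -/
def ndSet (Φ : Set V) : Set V := Φ \ divSet Φ
/-- short roots: non-divisible roots of non-maximal squared length -/
def shortSet (Φ : Set V) : Set V := {α ∈ ndSet Φ | ∃ β ∈ ndSet Φ, ⟪α, α⟫ < ⟪β, β⟫}
/-- long roots -/
def longSet (Φ : Set V) : Set V := ndSet Φ \ shortSet Φ

/-- An extension datum of type `(Φ, Y)`. -/
def IsExtensionDatum (Φ : Set V) (Λ : V → Set Y) : Prop :=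
  (∀ α ∈ Φ, ∀ β ∈ Φ, ∀ z ∈ Λ α, ∀ y ∈ Λ β, y - pairing β α • z ∈ Λ (reflRoot α β)) ∧
  (0 : Y) ∈ Λ 0 ∧
  (∀ α ∈ ndSet Φ, (0 : Y) ∈ Λ α) ∧
  (∀ α ∈ divSet Φ, (Λ α).Nonempty) ∧
  Submodule.span ℝ (⋃ α ∈ insert (0 : V) Φ, Λ α) = ⊤

/-- subroot system of a finite root system -/
def IsSubRS (Φ Δ : Set V) : Prop :=
  Δ.Nonempty ∧ Δ ⊆ Φ ∧ ∀ α ∈ Δ, ∀ β ∈ Δ, reflRoot α β ∈ Δ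

def IsClosedSubRS (Φ Δ : Set V) : Prop :=
  IsSubRS Φ Δ ∧ ∀ α ∈ Δ, ∀ β ∈ Δ, α + β ∈ Φ → α + β ∈ Δ

def IsMaxClosedSubRS (Φ Δ : Set V) : Prop :=
  IsClosedSubRS Φ Δ ∧ Δ ≠ Φ ∧
    ∀ Δ' : Set V, IsClosedSubRS Φ Δ' → Δ' ≠ Φ → Δ ⊆ Δ' → Δ' = Δ

/-- semi-closed subroot system, relative to given short/long/divisible parts -/
def IsSemiClosedSubRS (Φ Φs Φl Φd Δ : Set V) : Prop :=
  IsSubRS Φ Δ ∧ ¬ (∀ α ∈ Δ, ∀ β ∈ Δ, α + β ∈ Φ → α + β ∈ Δ) ∧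
    ∀ α ∈ Δ, ∀ β ∈ Δ, α + β ∈ Φ → α + β ∉ Δ →
      (α ∈ Φs ∧ β ∈ Φs ∧ α + β ∈ Φl ∪ Φd) ∨ (α ∈ Φl ∧ β ∈ Φl ∧ α + β ∈ Φd)

def IsMaxSemiClosedSubRS (Φ Φs Φl Φd Δ : Set V) : Prop :=
  IsSemiClosedSubRS Φ Φs Φl Φd Δ ∧
    ∀ Δ' : Set V, IsClosedSubRS Φ Δ' → Δ' ≠ Φ → ¬ Δ ⊂ Δ'

/-- the set of real roots attached to an extension datum -/
def PhiRe (Φ : Set V) (Λ : V → Set Y) : Set (V × Y) := {x | x.1 ∈ Φ ∧ x.2 ∈ Λ x.1}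

/-- affine reflection `s_{α ⊕ y}(β ⊕ z) = s_α(β) ⊕ (z − (β,α∨)y)` -/
def reflAff (a x : V × Y) : V × Y := (reflRoot a.1 x.1, x.2 - pairing x.1 a.1 • a.2)

/-- subroot system of a set of real roots `R` -/
def IsSubSys (R Ψ : Set (V × Y)) : Prop :=
  Ψ.Nonempty ∧ Ψ ⊆ R ∧ Ψ ≠ R ∧ ∀ a ∈ Ψ, ∀ x ∈ Ψ, reflAff a x ∈ Ψ

def IsClosedSubSys (R Ψ : Set (V × Y)) : Prop :=
  IsSubSys R Ψ ∧ ∀ x ∈ Ψ, ∀ y ∈ Ψ, x + y ∈ R → x + y ∈ Ψ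

def IsMaxClosedSubSys (R Ψ : Set (V × Y)) : Prop :=
  IsClosedSubSys R Ψ ∧ ∀ Ψ' : Set (V × Y), IsClosedSubSys R Ψ' → Ψ ⊆ Ψ' → Ψ' = Ψ

/-- gradient of a subroot system -/
def Gr (Ψ : Set (V × Y)) : Set V := {α | ∃ y : Y, (α, y) ∈ Ψ}

def Zset (Ψ : Set (V × Y)) (α : V) : Set Y := {y | (α, y) ∈ Ψ}

abbrev E (n : ℕ) := EuclideanSpace ℝ (Fin n)

def eps {n : ℕ} (i : Fin n) : E n := EuclideanSpace.single i 1

def shortBC (n : ℕ) : Set (E n) := {v | ∃ i : Fin n, v = eps i ∨ v = -eps i}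

def longBC (n : ℕ) : Set (E n) :=
  {v | ∃ i j : Fin n, i ≠ j ∧ ∃ c d : ℝ, (c = 1 ∨ c = -1) ∧ (d = 1 ∨ d = -1) ∧
    v = c • eps i + d • eps j}

def divBC (n : ℕ) : Set (E n) :=
  {v | ∃ i : Fin n, v = (2:ℝ) • eps i ∨ v = -((2:ℝ) • eps i)}

def BCn (n : ℕ) : Set (E n) := shortBC n ∪ longBC n ∪ divBC n
def Bn (n : ℕ) : Set (E n) := shortBC n ∪ longBC n
def Cn (n : ℕ) : Set (E n) := longBC n ∪ divBC n

/-- `c` is a sign. -/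
def sg (c : ℝ) : Prop := c = 1 ∨ c = -1

lemma sg.neg {c : ℝ} (h : sg c) : sg (-c) := by
  rcases h with rfl | rfl
  · right; rfl
  · left; norm_num

lemma sg.mul {c d : ℝ} (h : sg c) (h' : sg d) : sg (c * d) := by
  rcases h with rfl | rfl <;> rcases h' with rfl | rfl <;> norm_num [sg]

lemma sg.sq {c : ℝ} (h : sg c) : c * c = 1 := by
  rcases h with rfl | rfl <;> norm_num

lemma sg.ne {c : ℝ} (h : sg c) : c ≠ 0 := by
  rcases h with rfl | rfl <;> norm_num

lemma sg_one : sg 1 := Or.inl rfl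

lemma sg.smul_mem {c : ℝ} (h : sg c) {L : AddSubgroup Y} {y : Y} (hy : y ∈ L) : c • y ∈ L := by
  rcases h with rfl | rfl
  · simpa using hy
  · simpa using hy

/-- `v` is a short root with index `i`. -/
def isS {n : ℕ} (i : Fin n) (v : E n) : Prop := ∃ c : ℝ, sg c ∧ v = c • eps i

/-- `v` is a long root with `r`-related indices. -/
def isL {n : ℕ} (r : Fin n → Fin n → Prop) (v : E n) : Prop :=
  ∃ p q : Fin n, p ≠ q ∧ r p q ∧ ∃ c d : ℝ, sg c ∧ sg d ∧ v = c • eps p + d • eps q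

lemma eps_apply {n : ℕ} (i j : Fin n) : (eps i : E n) j = if j = i then 1 else 0 := by
  simp [eps]

lemma eps_self {n : ℕ} (i : Fin n) : (eps i : E n) i = 1 := by simp [eps_apply]

lemma eps_ne {n : ℕ} {i j : Fin n} (h : j ≠ i) : (eps i : E n) j = 0 := by simp [eps_apply, h]

lemma inner_eps {n : ℕ} (i : Fin n) (v : E n) : ⟪v, eps i⟫ = v i := by
  simp [eps, EuclideanSpace.inner_single_right]

lemma short_iff {n : ℕ} (v : E n) : v ∈ shortBC n ↔ ∃ i, isS i v := by
  constructor
  · rintro ⟨i, h | h⟩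
    · exact ⟨i, 1, Or.inl rfl, by simpa using h⟩
    · exact ⟨i, -1, Or.inr rfl, by simpa using h⟩
  · rintro ⟨i, c, rfl | rfl, h⟩
    · exact ⟨i, Or.inl (by simpa using h)⟩
    · exact ⟨i, Or.inr (by simpa using h)⟩

lemma isS_iff {n : ℕ} (i : Fin n) (v : E n) : isS i v ↔ (v = eps i ∨ v = -eps i) := by
  constructor
  · rintro ⟨c, rfl | rfl, h⟩
    · exact Or.inl (by simpa using h)
    · exact Or.inr (by simpa using h)
  · rintro (h | h)
    · exact ⟨1, Or.inl rfl, by simpa using h⟩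
    · exact ⟨-1, Or.inr rfl, by simpa using h⟩

lemma long_iff {n : ℕ} (v : E n) : v ∈ longBC n ↔ isL (fun _ _ => True) v := by
  constructor
  · rintro ⟨p, q, h, c, d, hc, hd, e⟩
    exact ⟨p, q, h, trivial, c, d, hc, hd, e⟩
  · rintro ⟨p, q, h, -, c, d, hc, hd, e⟩
    exact ⟨p, q, h, c, d, hc, hd, e⟩

lemma isL.long {n : ℕ} {r : Fin n → Fin n → Prop} {v : E n} (h : isL r v) : v ∈ longBC n := by
  obtain ⟨p, q, h, -, c, d, hc, hd, e⟩ := h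
  exact ⟨p, q, h, c, d, hc, hd, e⟩

lemma isS.short {n : ℕ} {i : Fin n} {v : E n} (h : isS i v) : v ∈ shortBC n :=
  (short_iff v).2 ⟨i, h⟩

lemma S_short {n : ℕ} (i : Fin n) {c : ℝ} (hc : sg c) : c • eps i ∈ shortBC n :=
  isS.short (i := i) ⟨c, hc, rfl⟩

lemma L_long {n : ℕ} {i j : Fin n} (h : i ≠ j) {c d : ℝ} (hc : sg c) (hd : sg d) :
    c • eps i + d • eps j ∈ longBC n := ⟨i, j, h, c, d, hc, hd, rfl⟩

/-- coordinates of a root -/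
lemma Bn_coord {n : ℕ} {v : E n} (hv : v ∈ Bn n) (k : Fin n) : v k = 0 ∨ v k = 1 ∨ v k = -1 := by
  rcases hv with hv | hv
  · obtain ⟨i, c, hc, rfl⟩ := (short_iff v).1 hv
    by_cases h : k = i
    · subst h
      rcases hc with rfl | rfl <;> simp [eps_self]
    · simp [eps_ne h]
  · obtain ⟨p, q, hpq, c, d, hc, hd, rfl⟩ := hv
    by_cases h : k = p
    · subst h
      rcases hc with rfl | rfl <;> simp [eps_self, eps_ne hpq]
    · by_cases h' : k = q
      · subst h'
        rcases hd with rfl | rfl <;> simp [eps_self, eps_ne h]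
      · simp [eps_ne h, eps_ne h']

lemma Bn_ne {n : ℕ} {v : E n} (hv : v ∈ Bn n) : v ≠ 0 := by
  rcases hv with hv | hv
  · obtain ⟨i, c, hc, rfl⟩ := (short_iff v).1 hv
    intro h
    have := congrArg (fun w : E n => w i) h
    simp [eps_self] at this
    exact hc.ne this
  · obtain ⟨p, q, hpq, c, d, hc, hd, rfl⟩ := hv
    intro h
    have := congrArg (fun w : E n => w p) h
    simp [eps_self, eps_ne hpq] at this
    exact hc.elim (fun h => by norm_num [h] at this) (fun h => by norm_num [h] at this)

lemma Bn_three {n : ℕ} {v : E n} (hv : v ∈ Bn n) {i j k : Fin n} (hij : i ≠ j) (hik : i ≠ k)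
    (hjk : j ≠ k) (hi : v i ≠ 0) (hj : v j ≠ 0) (hk : v k ≠ 0) : False := by
  rcases hv with hv | hv
  · obtain ⟨a, c, hc, rfl⟩ := (short_iff v).1 hv
    simp [eps_apply] at hi hj
    exact hij (hi.1.trans hj.1.symm)
  · obtain ⟨p, q, hpq, c, d, hc, hd, rfl⟩ := hv
    have key : ∀ l : Fin n, (c • eps p + d • eps q : E n) l ≠ 0 → l = p ∨ l = q := by
      intro l hl
      by_contra hcon
      push Not at hcon
      exact hl (by simp [eps_ne hcon.1, eps_ne hcon.2])
    rcases key i hi with h1 | h1 <;> rcases key j hj with h2 | h2 <;>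
      rcases key k hk with h3 | h3 <;> grind

lemma sum_SS {n : ℕ} {i j : Fin n} {c d : ℝ} (hc : sg c) (hd : sg d)
    (h : (c • eps i + d • eps j : E n) ∈ Bn n) : i ≠ j := by
  rintro rfl
  have h1 := Bn_coord h i
  have h2 := Bn_ne h
  simp [eps_self] at h1
  rcases hc with rfl | rfl <;> rcases hd with rfl | rfl <;> first | (norm_num at h1; done) | (norm_num at h2; done)

lemma isL_swap {n : ℕ} {r : Fin n → Fin n → Prop} (hs : ∀ i j, r i j → r j i)
    {v : E n} (h : isL r v) (k : Fin n) (hk : v k ≠ 0) :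
    ∃ q, k ≠ q ∧ r k q ∧ ∃ c d : ℝ, sg c ∧ sg d ∧ v = c • eps k + d • eps q := by
  obtain ⟨p, q, hpq, hr, c, d, hc, hd, rfl⟩ := h
  by_cases h1 : k = p
  · subst h1; exact ⟨q, hpq, hr, c, d, hc, hd, rfl⟩
  · by_cases h2 : k = q
    · subst h2; exact ⟨p, hpq.symm, hs _ _ hr, d, c, hd, hc, add_comm _ _⟩
    · exact absurd (by simp [eps_ne h1, eps_ne h2]) hk

lemma sg_add {a b : ℝ} (ha : sg a) (hb : sg b) (h : a + b = 0 ∨ a + b = 1 ∨ a + b = -1) :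
    b = -a := by
  rcases ha with rfl | rfl <;> rcases hb with rfl | rfl <;> first | (norm_num; done) | (norm_num at h; done)

lemma sum_SL {n : ℕ} {r : Fin n → Fin n → Prop} (hs : ∀ i j, r i j → r j i) {i : Fin n}
    {α β : E n} (hα : isS i α) (hβ : isL r β) (h : α + β ∈ Bn n) :
    ∃ j, r i j ∧ isS j (α + β) := by
  obtain ⟨c, hc, rfl⟩ := hα
  by_cases hi : β i = 0
  · exfalso
    obtain ⟨p, q, hpq, hr, a, b, ha, hb, rfl⟩ := hβ
    have hip : i ≠ p := by
      rintro rfl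
      simp [eps_self, eps_ne hpq] at hi
      exact ha.ne hi
    have hiq : i ≠ q := by
      rintro rfl
      simp [eps_self, eps_ne hip] at hi
      exact hb.ne hi
    apply Bn_three h hip hiq hpq
    · simp [eps_self, eps_ne hip, eps_ne hiq, hc.ne]
    · simp [eps_self, eps_ne hip.symm, eps_ne hpq, ha.ne]
    · simp [eps_self, eps_ne hiq.symm, eps_ne hpq.symm, hb.ne]
  · obtain ⟨q, hiq, hr, a, b, ha, hb, rfl⟩ := isL_swap hs hβ i hi
    have := Bn_coord h i
    simp [eps_self, eps_ne hiq] at this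
    have := sg_add hc ha this
    subst this
    exact ⟨q, hr, b, hb, by module⟩

lemma sum_LL {n : ℕ} {r : Fin n → Fin n → Prop} (hs : ∀ i j, r i j → r j i)
    (ht : ∀ i j k, r i j → r j k → r i k)
    {α β : E n} (hα : isL r α) (hβ : isL r β) (h : α + β ∈ Bn n) : isL r (α + β) := by
  have key : ∃ k, α k ≠ 0 ∧ β k ≠ 0 := by
    by_contra hcon
    push Not at hcon
    obtain ⟨p, q, hpq, hr, a, b, ha, hb, rfl⟩ := hα
    obtain ⟨s, t, hst, hr', c, d, hc, hd, rfl⟩ := hβ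
    have hp := hcon p (by simpa [eps_self, eps_ne hpq] using ha.ne)
    have hq := hcon q (by simpa [eps_self, eps_ne hpq.symm] using hb.ne)
    have hcs : (c • eps s + d • eps t : E n) s ≠ 0 := by
      simpa [eps_self, eps_ne hst] using hc.ne
    have hps : p ≠ s := by rintro rfl; exact hcs hp
    have hqs : q ≠ s := by rintro rfl; exact hcs hq
    apply Bn_three h hpq hps hqs
    · rw [PiLp.add_apply, hp]
      simpa [eps_self, eps_ne hpq] using ha.ne
    · rw [PiLp.add_apply, hq]
      simpa [eps_self, eps_ne hpq.symm] using hb.ne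
    · rw [PiLp.add_apply]
      simpa [eps_ne hps.symm, eps_ne hqs.symm] using hcs
  obtain ⟨k, h1, h2⟩ := key
  obtain ⟨p, hkp, hr, a, b, ha, hb, rfl⟩ := isL_swap hs hα k h1
  obtain ⟨q, hkq, hr', c, d, hc, hd, rfl⟩ := isL_swap hs hβ k h2
  have h3 := Bn_coord h k
  simp [eps_self, eps_ne hkp, eps_ne hkq] at h3
  have := sg_add ha hc h3
  subst this
  have e : (a • eps k + b • eps p + (-a • eps k + d • eps q) : E n) = b • eps p + d • eps q := by
    module
  rw [e] at h ⊢
  exact ⟨p, q, sum_SS hb hd h, ht _ _ _ (hs _ _ hr) hr', b, d, hb, hd, rfl⟩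

/-! reflections -/

lemma pairing_S {n : ℕ} (v : E n) (i : Fin n) {c : ℝ} (hc : sg c) :
    pairing v (c • eps i) = 2 * c * v i := by
  have := hc.ne
  simp only [pairing, inner_smul_right, inner_smul_left, inner_eps, eps_self]
  simp
  field_simp
  rw [pow_two, hc.sq, one_mul]

lemma pairing_L {n : ℕ} (v : E n) {p q : Fin n} (hpq : p ≠ q) {c d : ℝ} (hc : sg c) (hd : sg d) :
    pairing v (c • eps p + d • eps q) = c * v p + d * v q := by
  simp only [pairing, inner_smul_right, inner_add_right, inner_eps, PiLp.add_apply,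
    PiLp.smul_apply, eps_self, eps_ne hpq, eps_ne hpq.symm, smul_eq_mul]
  have := hc.sq
  have := hd.sq
  have e : c * (c * 1 + d * 0) + d * (c * 0 + d * 1) = 2 := by linarith
  rw [e]; ring

lemma pairing_lin {V : Type*} [NormedAddCommGroup V] [InnerProductSpace ℝ V]
    (u v α : V) (a b : ℝ) :
    pairing (a • u + b • v) α = a * pairing u α + b * pairing v α := by
  simp only [pairing, inner_add_left, inner_smul_left]
  simp
  ring

lemma pairing_smul {V : Type*} [NormedAddCommGroup V] [InnerProductSpace ℝ V]
    (u α : V) (a : ℝ) : pairing (a • u) α = a * pairing u α := by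
  simp only [pairing, inner_smul_left]
  simp
  ring

lemma reflRoot_lin {V : Type*} [NormedAddCommGroup V] [InnerProductSpace ℝ V]
    (u v α : V) (a b : ℝ) :
    reflRoot α (a • u + b • v) = a • reflRoot α u + b • reflRoot α v := by
  simp only [reflRoot, pairing_lin]
  module

lemma reflRoot_smul {V : Type*} [NormedAddCommGroup V] [InnerProductSpace ℝ V]
    (u α : V) (a : ℝ) : reflRoot α (a • u) = a • reflRoot α u := by
  simp only [reflRoot, pairing_smul]
  module

lemma pairing_self {V : Type*} [NormedAddCommGroup V] [InnerProductSpace ℝ V]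
    {α : V} (h : α ≠ 0) : pairing α α = 2 := by
  have : ⟪α, α⟫ ≠ 0 := by simpa using h
  simp only [pairing]
  field_simp

lemma refl_neg {V : Type*} [NormedAddCommGroup V] [InnerProductSpace ℝ V]
    {x : V × Y} (h : x.1 ≠ 0) : reflAff x x = -x := by
  ext
  · simp only [reflAff, reflRoot, pairing_self h, Prod.fst_neg]; module
  · simp only [reflAff, pairing_self h, Prod.snd_neg]; module

/-- a reflection in a short root is a signed permutation -/
lemma refl_S {n : ℕ} (i : Fin n) {c : ℝ} (hc : sg c) (k : Fin n) :
    ∃ s : ℝ, sg s ∧ reflRoot (c • eps i) (eps k) = s • eps k := by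
  simp only [reflRoot, pairing_S _ _ hc]
  have h2 := hc.sq
  by_cases h : i = k
  · subst h
    refine ⟨-1, Or.inr rfl, ?_⟩
    rw [eps_self, smul_smul, show 2 * c * 1 * c = 2 by linarith]
    module
  · refine ⟨1, Or.inl rfl, ?_⟩
    rw [eps_ne h]
    simp

lemma refl_L {n : ℕ} {p q : Fin n} (hpq : p ≠ q) {c d : ℝ} (hc : sg c) (hd : sg d) (k : Fin n) :
    ∃ s : ℝ, sg s ∧
      reflRoot (c • eps p + d • eps q) (eps k) = s • eps (Equiv.swap p q k) := by
  simp only [reflRoot, pairing_L _ hpq hc hd]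
  have h2 := hc.sq
  have h3 := hd.sq
  by_cases h : p = k
  · subst h
    refine ⟨-(c * d), (hc.mul hd).neg, ?_⟩
    rw [eps_self, eps_ne hpq.symm, Equiv.swap_apply_left]
    simp only [mul_one, mul_zero, add_zero, smul_add, smul_smul, h2]
    module
  · by_cases h' : q = k
    · subst h'
      refine ⟨-(c * d), (hc.mul hd).neg, ?_⟩
      rw [eps_self, eps_ne hpq, Equiv.swap_apply_right]
      simp only [mul_one, mul_zero, zero_add, smul_add, smul_smul, h3]
      module
    · refine ⟨1, Or.inl rfl, ?_⟩
      rw [eps_ne h, eps_ne h', Equiv.swap_apply_of_ne_of_ne (Ne.symm h) (Ne.symm h')]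
      simp
/-- The combinatorial data behind the sets in the theorem. -/
structure Good {n : ℕ} (Λs : Set Y) (L : AddSubgroup Y) (r : Fin n → Fin n → Prop)
    (Z : Fin n → Set Y) : Prop where
  rfl' : ∀ i, r i i
  symm : ∀ i j, r i j → r j i
  trans : ∀ i j k, r i j → r j k → r i k
  Zr : ∀ i j, r i j → Z i ⊆ Z j
  add : ∀ i, ∀ z ∈ Z i, ∀ h ∈ L, z + h ∈ Z i
  disj : ∀ i j, ¬ r i j → ∀ z ∈ Z i, z ∉ Z j
  sub : ∀ i, Z i ⊆ Λs
  cover : ∀ i j, ¬ r i j → ∀ z ∈ Λs, z ∈ Z i ∨ z ∈ Z j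
  cls : ∀ i j k, ¬ r i j → r k i ∨ r k j
  ex : ∀ i, ∃ j, ¬ r i j
  ne : ∀ i, (Z i).Nonempty
  two : ∀ z ∈ Λs, z + z ∈ L

def Form {n : ℕ} (L : AddSubgroup Y) (r : Fin n → Fin n → Prop)
    (Z : Fin n → Set Y) : Set (E n × Y) :=
  {x | (∃ i, isS i x.1 ∧ x.2 ∈ Z i) ∨ (isL r x.1 ∧ x.2 ∈ L)}

section
variable {n : ℕ} {Λ : E n → Set Y} {Λs : Set Y} {L : AddSubgroup Y} {r : Fin n → Fin n → Prop}
    {Z : Fin n → Set Y}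

lemma Re_iff (hs : ∀ α ∈ shortBC n, Λ α = Λs) (hl : ∀ α ∈ longBC n, Λ α = (L : Set Y))
    (x : E n × Y) : x ∈ PhiRe (Bn n) Λ ↔
      (x.1 ∈ shortBC n ∧ x.2 ∈ Λs) ∨ (x.1 ∈ longBC n ∧ x.2 ∈ L) := by
  constructor
  · rintro ⟨h | h, h'⟩
    · exact Or.inl ⟨h, hs _ h ▸ h'⟩
    · rw [hl _ h] at h'
      exact Or.inr ⟨h, h'⟩
  · rintro (⟨h, h'⟩ | ⟨h, h'⟩)
    · exact ⟨Or.inl h, by rw [hs _ h]; exact h'⟩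
    · exact ⟨Or.inr h, by rw [hl _ h]; exact h'⟩

lemma Form_refl_key (G : Good Λs L r Z) {a : E n × Y} (ha : a ∈ Form L r Z) :
    (∀ k, pairing (eps k) a.1 • a.2 ∈ L) ∧ ∃ σ : Equiv.Perm (Fin n), ∀ k, r k (σ k) ∧
      ∃ s : ℝ, sg s ∧ reflRoot a.1 (eps k) = s • eps (σ k) := by
  obtain ⟨α, y⟩ := a
  rcases ha with ⟨i, ⟨c, hc, h⟩, hz⟩ | ⟨⟨p, q, hpq, hr, c, d, hc, hd, h⟩, hy⟩
  · dsimp only at h hz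
    subst h
    refine ⟨fun k => ?_, 1, fun k => ⟨G.rfl' k, refl_S i hc k⟩⟩
    dsimp only
    rw [pairing_S _ _ hc]
    by_cases h : i = k
    · subst h
      rw [eps_self, show (2 * c * 1) • y = c • (y + y) by module]
      exact hc.smul_mem (G.two _ (G.sub _ hz))
    · rw [eps_ne h]; simp
  · dsimp only at h hy
    subst h
    refine ⟨fun k => ?_, Equiv.swap p q, fun k => ⟨?_, refl_L hpq hc hd k⟩⟩
    · dsimp only
      rw [pairing_L _ hpq hc hd]
      by_cases h : p = k
      · subst h
        rw [eps_self, eps_ne hpq.symm]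
        simpa using hc.smul_mem hy
      · by_cases h' : q = k
        · subst h'
          rw [eps_self, eps_ne hpq]
          simpa using hd.smul_mem hy
        · rw [eps_ne h, eps_ne h']; simp
    · by_cases h : p = k
      · subst h; rw [Equiv.swap_apply_left]; exact hr
      · by_cases h' : q = k
        · subst h'; rw [Equiv.swap_apply_right]; exact G.symm _ _ hr
        · rw [Equiv.swap_apply_of_ne_of_ne (Ne.symm h) (Ne.symm h')]; exact G.rfl' k

lemma Form_refl (G : Good Λs L r Z) {a x : E n × Y} (ha : a ∈ Form L r Z) (hx : x ∈ Form L r Z) :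
    reflAff a x ∈ Form L r Z := by
  obtain ⟨h1, σ, h2⟩ := Form_refl_key G ha
  obtain ⟨β, z⟩ := x
  rcases hx with ⟨i, ⟨c, hc, h⟩, hz⟩ | ⟨⟨p, q, hpq, hr, c, d, hc, hd, h⟩, hy⟩
  · left
    dsimp only at h hz
    subst h
    obtain ⟨hr, s, hs, e⟩ := h2 i
    refine ⟨σ i, ⟨c * s, hc.mul hs, ?_⟩, ?_⟩
    · simp only [reflAff, reflRoot_smul, e, smul_smul]
    · apply G.Zr _ _ hr
      simp only [reflAff, pairing_smul, mul_smul, sub_eq_add_neg]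
      exact G.add _ _ hz _ (L.neg_mem (hc.smul_mem (h1 i)))
  · right
    dsimp only at h hy
    subst h
    obtain ⟨hrp, s, hs, e⟩ := h2 p
    obtain ⟨hrq, t, ht, e'⟩ := h2 q
    refine ⟨⟨σ p, σ q, fun h => hpq (σ.injective h),
      G.trans _ _ _ (G.symm _ _ hrp) (G.trans _ _ _ hr hrq), c * s, d * t, hc.mul hs,
      hd.mul ht, ?_⟩, ?_⟩
    · simp only [reflAff, reflRoot_lin, e, e', smul_smul]
    · simp only [reflAff, pairing_lin, mul_smul, add_smul]
      exact L.sub_mem hy (L.add_mem (hc.smul_mem (h1 p)) (hd.smul_mem (h1 q)))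

lemma Form_sub (G : Good Λs L r Z) (hs : ∀ α ∈ shortBC n, Λ α = Λs)
    (hl : ∀ α ∈ longBC n, Λ α = (L : Set Y)) : Form L r Z ⊆ PhiRe (Bn n) Λ := by
  intro x hx
  rw [Re_iff hs hl]
  rcases hx with ⟨i, h, hz⟩ | ⟨h, hy⟩
  · exact Or.inl ⟨h.short, G.sub _ hz⟩
  · exact Or.inr ⟨h.long, hy⟩

lemma SL_disj {v : E n} (h : v ∈ shortBC n) (h' : v ∈ longBC n) : False := by
  obtain ⟨i, c, hc, rfl⟩ := (short_iff v).1 h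
  obtain ⟨p, q, hpq, a, b, ha, hb, e⟩ := h'
  have h1 := congrArg (fun w : E n => w p) e
  have h2 := congrArg (fun w : E n => w q) e
  simp only [PiLp.add_apply, PiLp.smul_apply, eps_self, eps_ne hpq, eps_ne hpq.symm,
    smul_eq_mul, eps_apply] at h1 h2
  have ha' := sg.ne ha
  have hb' := sg.ne hb
  by_cases hp : p = i
  · have hq : q ≠ i := fun hq => hpq (hp.trans hq.symm)
    rw [if_neg hq] at h2
    exact hb' (by linarith)
  · rw [if_neg hp] at h1
    exact ha' (by linarith)

lemma Form_add (G : Good Λs L r Z) (hs : ∀ α ∈ shortBC n, Λ α = Λs)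
    (hl : ∀ α ∈ longBC n, Λ α = (L : Set Y)) {x y : E n × Y} (hx : x ∈ Form L r Z)
    (hy : y ∈ Form L r Z) (h : x + y ∈ PhiRe (Bn n) Λ) : x + y ∈ Form L r Z := by
  have hB : x.1 + y.1 ∈ Bn n := h.1
  have hm : ∀ {x y : E n × Y}, x ∈ Form L r Z → (∃ i, isS i x.1 ∧ x.2 ∈ Z i) →
      (isL r y.1 ∧ y.2 ∈ L) → x.1 + y.1 ∈ Bn n → x + y ∈ Form L r Z := by
    rintro x y - ⟨i, hi, hz⟩ ⟨hL, hy⟩ hB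
    obtain ⟨j, hij, hj⟩ := sum_SL G.symm hi hL hB
    exact Or.inl ⟨j, hj, G.Zr _ _ hij (G.add _ _ hz _ hy)⟩
  rcases id hx with h1 | h1 <;> rcases id hy with h2 | h2
  · obtain ⟨i, ⟨c, hc, e1⟩, hzi⟩ := h1
    obtain ⟨j, ⟨d, hd, e2⟩, hzj⟩ := h2
    rw [e1, e2] at hB
    have hij := sum_SS hc hd hB
    have hlong : (x + y).1 ∈ longBC n := by
      rw [Prod.fst_add, e1, e2]; exact L_long hij hc hd
    have hsum : x.2 + y.2 ∈ L := by
      rcases (Re_iff hs hl _).1 h with h' | h'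
      · exact (SL_disj h'.1 hlong).elim
      · exact h'.2
    by_cases hr : r i j
    · exact Or.inr ⟨⟨i, j, hij, hr, c, d, hc, hd, by rw [Prod.fst_add, e1, e2]⟩, hsum⟩
    · exfalso
      refine G.disj i j hr _ hzi ?_
      have := G.add j _ hzj _ (L.sub_mem hsum (G.two _ (G.sub _ hzj)))
      convert this using 1
      module
  · exact hm hx h1 h2 hB
  · rw [add_comm]
    exact hm hy h2 h1 (by rwa [add_comm])
  · exact Or.inr ⟨sum_LL G.symm G.trans h1.1 h2.1 hB, L.add_mem h1.2 h2.2⟩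

lemma L_rel {i j : Fin n} {c d : ℝ} (hij : i ≠ j) (hc : sg c) (hd : sg d)
    (G : Good Λs L r Z) (h : isL r (c • eps i + d • eps j : E n)) : r i j := by
  obtain ⟨q, h1, h2, a, b, ha, hb, e⟩ := isL_swap G.symm h i
    (by simpa [eps_self, eps_ne hij] using hc.ne)
  have h3 := congrArg (fun w : E n => w j) e
  simp only [PiLp.add_apply, PiLp.smul_apply, eps_self, eps_ne hij.symm, smul_eq_mul] at h3
  by_cases hq : j = q
  · subst hq; exact h2
  · rw [eps_ne hq] at h3
    exact absurd (by simpa using h3) hd.ne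

lemma Form_cross (G : Good Λs L r Z) {i j : Fin n} {c d : ℝ} (hij : ¬ r i j) (hc : sg c)
    (hd : sg d) (y : Y) : (c • eps i + d • eps j, y) ∉ Form L r Z := by
  have hne : i ≠ j := by rintro rfl; exact hij (G.rfl' _)
  rintro (⟨k, hk, -⟩ | ⟨h, -⟩)
  · exact SL_disj hk.short (L_long hne hc hd)
  · exact hij (L_rel hne hc hd G h)

lemma Form_closed (G : Good Λs L r Z) (hn : 2 ≤ n) (hs : ∀ α ∈ shortBC n, Λ α = Λs)
    (hl : ∀ α ∈ longBC n, Λ α = (L : Set Y)) :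
    IsClosedSubSys (PhiRe (Bn n) Λ) (Form L r Z) := by
  obtain ⟨j, hj⟩ := G.ex ⟨0, by omega⟩
  have hne : (⟨0, by omega⟩ : Fin n) ≠ j := by rintro rfl; exact hj (G.rfl' _)
  refine ⟨⟨?_, Form_sub G hs hl, ?_, fun a ha x hx => Form_refl G ha hx⟩,
    fun x hx y hy h => Form_add G hs hl hx hy h⟩
  · obtain ⟨z, hz⟩ := G.ne j
    exact ⟨((1 : ℝ) • eps j, z), Or.inl ⟨j, ⟨1, sg_one, rfl⟩, hz⟩⟩
  · intro h
    apply Form_cross G hj sg_one sg_one 0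
    rw [h, Re_iff hs hl]
    exact Or.inr ⟨L_long hne sg_one sg_one, L.zero_mem⟩

lemma Form_max (G : Good Λs L r Z) (hs : ∀ α ∈ shortBC n, Λ α = Λs)
    (hl : ∀ α ∈ longBC n, Λ α = (L : Set Y)) (P : Set (E n × Y))
    (hP : IsClosedSubSys (PhiRe (Bn n) Λ) P) (hsub : Form L r Z ⊆ P) : P = Form L r Z := by
  obtain ⟨⟨-, hPR, hne, -⟩, hadd⟩ := hP
  have rne : ∀ {i j}, ¬ r i j → i ≠ j := by rintro i _ h rfl; exact h (G.rfl' _)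
  have nsym : ∀ {i j}, ¬ r i j → ¬ r j i := fun h h' => h (G.symm _ _ h')
  have hB : ∀ {i j : Fin n} {c d : ℝ} {z h : Y}, ¬ r i j → sg c → sg d → z ∈ Z j → h ∈ L →
      (c • eps i, z) ∈ P → (c • eps i + d • eps j, h) ∈ P := by
    intro i j c d z h hij hc hd hz hh hP
    have h1 : (d • eps j, h - z) ∈ P := by
      apply hsub
      refine Or.inl ⟨j, ⟨d, hd, rfl⟩, ?_⟩
      have := G.add j z hz _ (L.sub_mem hh (G.two _ (G.sub _ hz)))
      convert this using 1
      module
    have h2 := hadd _ hP _ h1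
    have e : ((c • eps i, z) + (d • eps j, h - z) : E n × Y) = (c • eps i + d • eps j, h) := by
      simp
    rw [e] at h2
    exact h2 ((Re_iff hs hl _).2 (Or.inr ⟨L_long (rne hij) hc hd, hh⟩))
  have hA : ∀ {i j : Fin n} {c d : ℝ} {w h : Y}, ¬ r i j → sg c → sg d → w ∈ Z j →
      (c • eps i + d • eps j, h) ∈ P → (c • eps i, w) ∈ P := by
    intro i j c d w h hij hc hd hw hP
    have hh : h ∈ L := by
      rcases (Re_iff hs hl _).1 (hPR hP) with h' | h'
      · exact (SL_disj h'.1 (L_long (rne hij) hc hd)).elim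
      · exact h'.2
    have h1 : (-d • eps j, w - h) ∈ P := by
      apply hsub
      refine Or.inl ⟨j, ⟨-d, hd.neg, rfl⟩, ?_⟩
      have := G.add j w hw _ (L.neg_mem hh)
      convert this using 1
      module
    have h2 := hadd _ hP _ h1
    have e : ((c • eps i + d • eps j, h) + (-d • eps j, w - h) : E n × Y) = (c • eps i, w) := by
      ext1
      · simp
      · simp
    rw [e] at h2
    exact h2 ((Re_iff hs hl _).2 (Or.inl ⟨S_short i hc, G.sub _ hw⟩))
  -- existence of a cross root
  let X : Fin n → Fin n → Prop := fun i j => ∃ c d : ℝ, ∃ h : Y, sg c ∧ sg d ∧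
    (c • eps i + d • eps j, h) ∈ P
  have Xsymm : ∀ {i j}, X i j → X j i := by
    rintro i j ⟨c, d, h, hc, hd, hm⟩
    exact ⟨d, c, h, hd, hc, by rwa [add_comm]⟩
  have Xfull : ∀ {i j}, ¬ r i j → X i j → ∀ c d : ℝ, sg c → sg d → ∀ h ∈ L,
      (c • eps i + d • eps j, h) ∈ P := by
    intro i j hij hX
    have step : ∀ {i j}, ¬ r i j → ∀ {c d : ℝ} {h : Y}, sg c → sg d →
        (c • eps i + d • eps j, h) ∈ P → ∀ d' : ℝ, sg d' → ∀ h' ∈ L,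
        (c • eps i + d' • eps j, h') ∈ P := by
      intro i j hij c d h hc hd hm d' hd' h' hh'
      obtain ⟨w, hw⟩ := G.ne j
      exact hB hij hc hd' hw hh' (hA hij hc hd hw hm)
    obtain ⟨c₀, d₀, h₀, hc₀, hd₀, hm⟩ := hX
    intro c d hc hd h hh
    have h1 := step hij hc₀ hd₀ hm d hd 0 L.zero_mem
    rw [add_comm] at h1 ⊢
    exact step (nsym hij) hd hc₀ h1 c hc h hh
  have Xmove : ∀ {i i' j}, ¬ r i j → r i i' → X i j → X i' j := by
    intro i i' j hij hii hX
    by_cases hEq : i = i'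
    · subst hEq; exact hX
    have hij' : ¬ r i' j := fun h => hij (G.trans _ _ _ hii h)
    have h1 := Xfull hij hX 1 1 sg_one sg_one 0 L.zero_mem
    have h2 : ((-1 : ℝ) • eps i + (1 : ℝ) • eps i', (0 : Y)) ∈ P :=
      hsub (Or.inr ⟨⟨i, i', hEq, hii, -1, 1, sg_one.neg, sg_one, rfl⟩, L.zero_mem⟩)
    have h3 := hadd _ h1 _ h2
    have e : (((1 : ℝ) • eps i + (1 : ℝ) • eps j, (0 : Y)) +
        ((-1 : ℝ) • eps i + (1 : ℝ) • eps i', (0 : Y)) : E n × Y) =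
        ((1 : ℝ) • eps i' + (1 : ℝ) • eps j, 0) := by
      ext1
      · simp only [Prod.fst_add]; module
      · simp
    rw [e] at h3
    exact ⟨1, 1, 0, sg_one, sg_one, h3 ((Re_iff hs hl _).2
      (Or.inr ⟨L_long (rne hij') sg_one sg_one, L.zero_mem⟩))⟩
  have Xall : ∀ {i j k l}, ¬ r i j → X i j → ¬ r k l → X k l := by
    have main : ∀ {i j k l}, ¬ r i j → X i j → r i k → r j l → X k l := by
      intro i j k l hij hX hik hjl
      have h1 := Xmove hij hik hX
      have h2 : ¬ r k j := fun h => hij (G.trans _ _ _ hik h)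
      exact Xsymm (Xmove (nsym h2) hjl (Xsymm h1))
    intro i j k l hij hX hkl
    have hkl' : ∀ m, r k m → r l m → False := fun m h1 h2 =>
      hkl (G.trans _ _ _ h1 (G.symm _ _ h2))
    rcases G.cls i j k hij with h1 | h1 <;> rcases G.cls i j l hij with h2 | h2
    · exact (hkl' _ h1 h2).elim
    · exact main hij hX (G.symm _ _ h1) (G.symm _ _ h2)
    · exact Xsymm (main hij hX (G.symm _ _ h2) (G.symm _ _ h1))
    · exact (hkl' _ h1 h2).elim
  refine Set.Subset.antisymm ?_ hsub
  intro x hx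
  by_contra hxF
  have hX : ∃ i j, ¬ r i j ∧ X i j := by
    obtain ⟨v, w⟩ := x
    rcases (Re_iff hs hl _).1 (hPR hx) with ⟨h1, h2⟩ | ⟨h1, h2⟩
    · obtain ⟨k, c, hc, e⟩ := (short_iff _).1 h1
      dsimp only at e
      subst e
      obtain ⟨l, hkl⟩ := G.ex k
      rcases G.cover k l hkl _ h2 with h3 | h3
      · exact (hxF (Or.inl ⟨k, ⟨c, hc, rfl⟩, h3⟩)).elim
      · exact ⟨k, l, hkl, c, 1, 0, hc, sg_one, hB hkl hc sg_one h3 L.zero_mem hx⟩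
    · obtain ⟨p, q, hpq, c, d, hc, hd, e⟩ := h1
      dsimp only at e
      subst e
      refine ⟨p, q, fun h => hxF (Or.inr ⟨⟨p, q, hpq, h, c, d, hc, hd, rfl⟩, h2⟩), c, d, w,
        hc, hd, hx⟩
  obtain ⟨i, j, hij, hX⟩ := hX
  apply hne
  refine Set.Subset.antisymm hPR ?_
  rintro ⟨v, w⟩ hy
  rcases (Re_iff hs hl _).1 hy with ⟨h1, h2⟩ | ⟨h1, h2⟩
  · obtain ⟨k, c, hc, e⟩ := (short_iff _).1 h1
    dsimp only at e
    subst e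
    obtain ⟨l, hkl⟩ := G.ex k
    rcases G.cover k l hkl _ h2 with h3 | h3
    · exact hsub (Or.inl ⟨k, ⟨c, hc, rfl⟩, h3⟩)
    · exact hA hkl hc sg_one h3
        (Xfull hkl (Xall hij hX hkl) c 1 hc sg_one 0 L.zero_mem)
  · obtain ⟨p, q, hpq, c, d, hc, hd, e⟩ := h1
    dsimp only at e
    subst e
    by_cases hr : r p q
    · exact hsub (Or.inr ⟨⟨p, q, hpq, hr, c, d, hc, hd, rfl⟩, h2⟩)
    · exact Xfull hr (Xall hij hX hr) c d hc hd w h2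

lemma Gr_Form (G : Good Λs L r Z) (v : E n) :
    v ∈ Gr (Form L r Z) ↔ (∃ i, isS i v) ∨ isL r v := by
  constructor
  · rintro ⟨y, ⟨i, h, -⟩ | ⟨h, -⟩⟩
    · exact Or.inl ⟨i, h⟩
    · exact Or.inr h
  · rintro (⟨i, h⟩ | h)
    · obtain ⟨z, hz⟩ := G.ne i
      exact ⟨z, Or.inl ⟨i, h, hz⟩⟩
    · exact ⟨0, Or.inr ⟨h, L.zero_mem⟩⟩

lemma Form_semi (G : Good Λs L r Z) (hn : 2 ≤ n) :
    IsSemiClosedSubRS (Bn n) (shortBC n) (longBC n) ∅ (Gr (Form L r Z)) := by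
  obtain ⟨j, hj⟩ := G.ex ⟨0, by omega⟩
  have hne : (⟨0, by omega⟩ : Fin n) ≠ j := by rintro rfl; exact hj (G.rfl' _)
  refine ⟨⟨?_, ?_, ?_⟩, ?_, ?_⟩
  · exact ⟨(1 : ℝ) • eps j, (Gr_Form G _).2 (Or.inl ⟨j, 1, sg_one, rfl⟩)⟩
  · intro v hv
    rcases (Gr_Form G _).1 hv with ⟨i, h⟩ | h
    · exact Or.inl h.short
    · exact Or.inr h.long
  · rintro α ⟨y, hy⟩ β ⟨z, hz⟩
    exact ⟨_, Form_refl G hy hz⟩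
  · intro h
    obtain ⟨y, hy⟩ := h _ ((Gr_Form G _).2 (Or.inl ⟨_, 1, sg_one, rfl⟩)) _
      ((Gr_Form G _).2 (Or.inl ⟨_, 1, sg_one, rfl⟩)) (Or.inr (L_long hne sg_one sg_one))
    exact Form_cross G hj sg_one sg_one y hy
  · intro α hα β hβ h h'
    rw [Gr_Form G] at hα hβ h'
    push Not at h'
    left
    rcases hα with ⟨i, hi⟩ | hα <;> rcases hβ with ⟨k, hk⟩ | hβ
    · refine ⟨hi.short, hk.short, Or.inl ?_⟩
      rcases h with h | h
      · obtain ⟨m, hm⟩ := (short_iff _).1 h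
        exact (h'.1 m hm).elim
      · exact h
    · obtain ⟨m, -, hm⟩ := sum_SL G.symm hi hβ h
      exact (h'.1 m hm).elim
    · rw [add_comm] at h h'
      obtain ⟨m, -, hm⟩ := sum_SL G.symm hk hα h
      exact (h'.1 m hm).elim
    · exact (h'.2 (sum_LL G.symm G.trans hα hβ h)).elim

end
section
variable {n : ℕ} {Λ : E n → Set Y} {Λs : Set Y} {L : AddSubgroup Y}

lemma fin_pair (hn : 2 ≤ n) : (⟨0, by omega⟩ : Fin n) ≠ ⟨1, by omega⟩ := by simp

/-- `2Λs ⊆ Λl` -/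
lemma ED_two (hn : 2 ≤ n) (hED : IsExtensionDatum (Bn n) Λ)
    (hs : ∀ α ∈ shortBC n, Λ α = Λs) (hl : ∀ α ∈ longBC n, Λ α = (L : Set Y)) :
    ∀ z ∈ Λs, z + z ∈ L := by
  intro z hz
  have h01 := fin_pair hn
  have hS := S_short (⟨0, by omega⟩ : Fin n) sg_one
  have hL := L_long h01 sg_one sg_one
  have h := hED.1 _ (Or.inl hS) _ (Or.inr hL) z (by rw [hs _ hS]; exact hz) 0
    (by rw [hl _ hL]; exact L.zero_mem)
  obtain ⟨s, hs1, e1⟩ := refl_S (⟨0, by omega⟩ : Fin n) sg_one ⟨0, by omega⟩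
  obtain ⟨t, ht1, e2⟩ := refl_S (⟨0, by omega⟩ : Fin n) sg_one ⟨1, by omega⟩
  rw [reflRoot_lin, e1, e2, smul_smul, smul_smul, one_mul, one_mul,
    hl _ (L_long h01 hs1 ht1), pairing_S _ _ sg_one] at h
  simp only [PiLp.add_apply, PiLp.smul_apply, eps_self, eps_ne h01] at h
  have h' := L.neg_mem h
  convert h' using 1
  simp only [smul_eq_mul]
  module

/-- `Λs + Λl ⊆ Λs` -/
lemma ED_add (hn : 2 ≤ n) (hED : IsExtensionDatum (Bn n) Λ)
    (hs : ∀ α ∈ shortBC n, Λ α = Λs) (hl : ∀ α ∈ longBC n, Λ α = (L : Set Y)) :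
    ∀ z ∈ Λs, ∀ h ∈ L, z + h ∈ Λs := by
  intro z hz y hy
  have h01 := fin_pair hn
  have hS := S_short (⟨0, by omega⟩ : Fin n) sg_one
  have hL := L_long h01 sg_one sg_one
  have h := hED.1 _ (Or.inr hL) _ (Or.inl hS) (-y) (by rw [hl _ hL]; exact L.neg_mem hy) z
    (by rw [hs _ hS]; exact hz)
  obtain ⟨s, hs1, e1⟩ := refl_L h01 sg_one sg_one ⟨0, by omega⟩
  rw [reflRoot_smul, e1, smul_smul, one_mul,
    hs _ (S_short _ hs1), pairing_L _ h01 sg_one sg_one] at h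
  simp only [PiLp.smul_apply, eps_self, eps_ne h01.symm] at h
  convert h using 1
  simp only [smul_eq_mul]
  module

/-- the relation and sets attached to `J, Z₁, Z₂` -/
def rJ (J : Set (Fin n)) (i j : Fin n) : Prop := (i ∈ J ∧ j ∈ J) ∨ (i ∉ J ∧ j ∉ J)

def ZJ (J : Set (Fin n)) (Z₁ Z₂ : Set Y) (i : Fin n) : Set Y :=
  {y | (i ∉ J ∧ y ∈ Z₁) ∨ (i ∈ J ∧ y ∈ Z₂)}

lemma good_J {J : Set (Fin n)} {Z₁ Z₂ : Set Y} (h1 : J ≠ ∅) (h2 : J ≠ Set.univ)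
    (h3 : Z₁.Nonempty) (h4 : Z₂.Nonempty) (h5 : Disjoint Z₁ Z₂)
    (h6 : ∀ z ∈ Z₁, ∀ h ∈ L, z + h ∈ Z₁) (h7 : ∀ z ∈ Z₂, ∀ h ∈ L, z + h ∈ Z₂)
    (h8 : Λs = Z₁ ∪ Z₂) (htwo : ∀ z ∈ Λs, z + z ∈ L) :
    Good Λs L (rJ J) (ZJ J Z₁ Z₂) := by
  obtain ⟨a, ha⟩ := Set.nonempty_iff_ne_empty.2 h1
  obtain ⟨b, hb⟩ := (Set.ne_univ_iff_exists_notMem _).1 h2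
  have h5' : ∀ z, z ∈ Z₁ → z ∉ Z₂ := fun z hz => Set.disjoint_left.1 h5 hz
  constructor
  · intro i; simp only [rJ]; tauto
  · intro i j; simp only [rJ]; tauto
  · intro i j k; simp only [rJ]; tauto
  · intro i j h z; simp only [rJ, ZJ, Set.mem_ofPred_eq] at *; tauto
  · rintro i z (⟨hi, hz⟩ | ⟨hi, hz⟩) h hh
    · exact Or.inl ⟨hi, h6 z hz h hh⟩
    · exact Or.inr ⟨hi, h7 z hz h hh⟩
  · intro i j h z
    have := h5' z
    simp only [rJ, ZJ, Set.mem_ofPred_eq] at *; tauto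
  · intro i z
    simp only [h8, ZJ, Set.mem_ofPred_eq, Set.mem_union]; tauto
  · intro i j h z
    simp only [h8, rJ, ZJ, Set.mem_ofPred_eq, Set.mem_union] at *; tauto
  · intro i j k
    simp only [rJ]; tauto
  · intro i
    by_cases hi : i ∈ J
    · exact ⟨b, by simp only [rJ]; tauto⟩
    · exact ⟨a, by simp only [rJ]; tauto⟩
  · intro i
    by_cases hi : i ∈ J
    · obtain ⟨z, hz⟩ := h4
      exact ⟨z, Or.inr ⟨hi, hz⟩⟩
    · obtain ⟨z, hz⟩ := h3
      exact ⟨z, Or.inl ⟨hi, hz⟩⟩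
  · exact htwo

lemma Form_eq (J : Set (Fin n)) (Z₁ Z₂ : Set Y) :
    {x : E n × Y | (∃ i, i ∉ J ∧ (x.1 = eps i ∨ x.1 = -eps i)) ∧ x.2 ∈ Z₁} ∪
            {x | (∃ j, j ∈ J ∧ (x.1 = eps j ∨ x.1 = -eps j)) ∧ x.2 ∈ Z₂} ∪
            {x | (∃ p q, p ≠ q ∧ ((p ∈ J ∧ q ∈ J) ∨ (p ∉ J ∧ q ∉ J)) ∧
              ∃ c d : ℝ, (c = 1 ∨ c = -1) ∧ (d = 1 ∨ d = -1) ∧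
                x.1 = c • eps p + d • eps q) ∧ x.2 ∈ L} = Form L (rJ J) (ZJ J Z₁ Z₂) := by
  ext x
  constructor
  · rintro ((⟨⟨i, hi, h⟩, hz⟩ | ⟨⟨i, hi, h⟩, hz⟩) | h)
    · exact Or.inl ⟨i, (isS_iff _ _).2 h, Or.inl ⟨hi, hz⟩⟩
    · exact Or.inl ⟨i, (isS_iff _ _).2 h, Or.inr ⟨hi, hz⟩⟩
    · exact Or.inr h
  · rintro (⟨i, h, ⟨hi, hz⟩ | ⟨hi, hz⟩⟩ | h)
    · exact Or.inl (Or.inl ⟨⟨i, hi, (isS_iff _ _).1 h⟩, hz⟩)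
    · exact Or.inl (Or.inr ⟨⟨i, hi, (isS_iff _ _).1 h⟩, hz⟩)
    · exact Or.inr h

lemma exists_J (hn : 2 ≤ n) (hED : IsExtensionDatum (Bn n) Λ)
    (hs : ∀ α ∈ shortBC n, Λ α = Λs) (hl : ∀ α ∈ longBC n, Λ α = (L : Set Y))
    {Ψ : Set (E n × Y)} (hM : IsMaxClosedSubSys (PhiRe (Bn n) Λ) Ψ)
    (hG : IsSemiClosedSubRS (Bn n) (shortBC n) (longBC n) ∅ (Gr Ψ)) :
    ∃ (J : Set (Fin n)) (Z₁ Z₂ : Set Y),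
        J ≠ ∅ ∧ J ≠ Set.univ ∧ Z₁.Nonempty ∧ Z₂.Nonempty ∧ Disjoint Z₁ Z₂ ∧
        (∀ z ∈ Z₁, ∀ h ∈ L, z + h ∈ Z₁) ∧ (∀ z ∈ Z₂, ∀ h ∈ L, z + h ∈ Z₂) ∧
        Λs = Z₁ ∪ Z₂ ∧ Ψ = Form L (rJ J) (ZJ J Z₁ Z₂) := by
  have htwo := ED_two hn hED hs hl
  have hadd := ED_add hn hED hs hl
  obtain ⟨⟨⟨-, hΨR, -, hrefl⟩, hcl⟩, hmax⟩ := hM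
  obtain ⟨⟨-, hGB, hGr⟩, hncl, hsemi⟩ := hG
  -- basic facts on the gradient
  have hneg : ∀ {x : E n × Y}, x ∈ Ψ → -x ∈ Ψ := by
    intro x hx
    rw [← refl_neg (Bn_ne (hΨR hx).1)]
    exact hrefl x hx x hx
  have gneg : ∀ {v : E n}, v ∈ Gr Ψ → -v ∈ Gr Ψ := by
    rintro v ⟨y, hy⟩
    exact ⟨-y, hneg hy⟩
  have gS : ∀ {i : Fin n} {c d : ℝ}, sg c → sg d → c • eps i ∈ Gr Ψ → d • eps i ∈ Gr Ψ := by
    rintro i c d hc hd h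
    have hv := gneg h
    rcases hc with rfl | rfl <;> rcases hd with rfl | rfl <;> first
      | exact h
      | simpa using hv
  -- sum with a long root
  have gsum : ∀ {α β : E n}, α ∈ Gr Ψ → β ∈ Gr Ψ → β ∈ longBC n → α + β ∈ Bn n →
      α + β ∈ Gr Ψ := by
    intro α β hα hβ hβl h
    by_contra hc
    rcases hsemi α hα β hβ h hc with h' | h'
    · exact SL_disj h'.2.1 hβl
    · exact h'.2.2
  have gLS : ∀ {p q : Fin n} {c d a b : ℝ}, p ≠ q → sg c → sg d → sg a → sg b →
      c • eps p + d • eps q ∈ Gr Ψ → a • eps p ∈ Gr Ψ → b • eps q ∈ Gr Ψ := by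
    intro p q c d a b hpq hc hd ha hb hL hS
    have h1 := gS ha hc.neg hS
    have e : (-c • eps p + (c • eps p + d • eps q) : E n) = d • eps q := by module
    have h2 := gsum h1 hL (L_long hpq hc hd) (by rw [e]; exact Or.inl (S_short q hd))
    rw [e] at h2
    exact gS hd hb h2
  -- changing signs
  have gsign : ∀ {p q : Fin n} {c d a b : ℝ}, p ≠ q → sg c → sg d → sg a → sg b →
      c • eps p + d • eps q ∈ Gr Ψ → (1 : ℝ) • eps p ∈ Gr Ψ → a • eps p + b • eps q ∈ Gr Ψ := by
    have flip : ∀ {p q : Fin n} {c d a : ℝ}, p ≠ q → sg c → sg d → sg a →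
        c • eps p + d • eps q ∈ Gr Ψ → (1 : ℝ) • eps p ∈ Gr Ψ →
        a • eps p + d • eps q ∈ Gr Ψ := by
      intro p q c d a hpq hc hd ha hL hS
      have h := hGr _ hS _ hL
      have e : reflRoot ((1 : ℝ) • eps p) (c • eps p + d • eps q : E n) =
          -c • eps p + d • eps q := by
        simp only [reflRoot, pairing_S _ _ sg_one, PiLp.add_apply, PiLp.smul_apply, eps_self,
          eps_ne hpq, smul_eq_mul]
        module
      rw [e] at h
      rcases hc with rfl | rfl <;> rcases ha with rfl | rfl <;> first
        | exact hL
        | simpa using h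
    intro p q c d a b hpq hc hd ha hb hL hS
    have h1 := flip hpq hc hd ha hL hS
    have hSq : (1 : ℝ) • eps q ∈ Gr Ψ := gLS hpq hc hd sg_one sg_one hL hS
    rw [add_comm] at h1 ⊢
    exact flip hpq.symm hd ha hb h1 hSq
  -- the witness of non-closedness
  push Not at hncl
  obtain ⟨α, hα, β, hβ, hB, hnG⟩ := hncl
  obtain ⟨hαs, hβs⟩ : α ∈ shortBC n ∧ β ∈ shortBC n := by
    rcases hsemi α hα β hβ hB hnG with h | h
    · exact ⟨h.1, h.2.1⟩
    · exact h.2.2.elim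
  obtain ⟨a, c, hc, rfl⟩ := (short_iff _).1 hαs
  obtain ⟨b, d, hd, rfl⟩ := (short_iff _).1 hβs
  have hab : a ≠ b := sum_SS hc hd hB
  have ha1 : (1 : ℝ) • eps a ∈ Gr Ψ := gS hc sg_one hα
  let J : Set (Fin n) := {j | j = a ∨ (a ≠ j ∧ (1 : ℝ) • eps a + (1 : ℝ) • eps j ∈ Gr Ψ)}
  have haJ : a ∈ J := Or.inl rfl
  have hbJ : b ∉ J := by
    rintro (h | ⟨h, h'⟩)
    · exact hab h.symm
    · exact hnG (gsign h sg_one sg_one hc hd h' ha1)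
  have hJS : ∀ {j}, j ∈ J → (1 : ℝ) • eps j ∈ Gr Ψ := by
    rintro j (rfl | ⟨h, h'⟩)
    · exact ha1
    · exact gLS h sg_one sg_one sg_one sg_one h' ha1
  have hJL : ∀ {p q : Fin n} {c d : ℝ}, p ≠ q → sg c → sg d → c • eps p + d • eps q ∈ Gr Ψ →
      p ∈ J → q ∈ J := by
    intro p q c d hpq hc hd hL hp
    have hpS := hJS hp
    by_cases hq : q = a
    · exact Or.inl hq
    refine Or.inr ⟨Ne.symm hq, ?_⟩
    rcases hp with rfl | ⟨hap, hp⟩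
    · exact gsign hpq hc hd sg_one sg_one hL hpS
    · have h1 := gsign hpq hc hd sg_one.neg sg_one hL hpS
      have h2 := gsum hp h1 (L_long hpq sg_one.neg sg_one)
        (by rw [show ((1 : ℝ) • eps a + (1 : ℝ) • eps p + (-(1:ℝ) • eps p + (1 : ℝ) • eps q) : E n) =
              (1 : ℝ) • eps a + (1 : ℝ) • eps q by module]
            exact Or.inr (L_long (Ne.symm hq) sg_one sg_one))
      rwa [show ((1 : ℝ) • eps a + (1 : ℝ) • eps p + (-(1:ℝ) • eps p + (1 : ℝ) • eps q) : E n) =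
              (1 : ℝ) • eps a + (1 : ℝ) • eps q by module] at h2
  let Z₂ : Set Y := {y | y ∈ Λs ∧ ∃ j ∈ J, ∃ c : ℝ, sg c ∧ ∃ z, (c • eps j, z) ∈ Ψ ∧ y - z ∈ L}
  have hΛs : ∀ {i : Fin n} {c : ℝ} {z : Y}, sg c → (c • eps i, z) ∈ Ψ → z ∈ Λs := by
    intro i c z hc h
    have := (hΨR h).2
    rwa [hs _ (S_short i hc)] at this
  have hZ2 : ∀ z ∈ Z₂, ∀ h ∈ L, z + h ∈ Z₂ := by
    rintro z ⟨hz, j, hj, c, hc, w, hw, hzw⟩ h hh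
    refine ⟨hadd z hz h hh, j, hj, c, hc, w, hw, ?_⟩
    rw [show z + h - w = (z - w) + h by abel]
    exact L.add_mem hzw hh
  -- shorts outside of `J`
  have hout : ∀ {i : Fin n} {c : ℝ} {y : Y}, i ∉ J → sg c → (c • eps i, y) ∈ Ψ → y ∉ Z₂ := by
    rintro i c y hi hc h ⟨hy, j, hj, d, hd, z, hz, hyz⟩
    have hji : j ≠ i := by rintro rfl; exact hi hj
    have e : ((c • eps i, y) + -(d • eps j, z) : E n × Y) =
        (-d • eps j + c • eps i, y - z) := by
      ext1
      · simp only [Prod.fst_add, Prod.fst_neg]; module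
      · simp only [Prod.snd_add, Prod.snd_neg]; abel
    have h1 := hcl _ h _ (hneg hz)
    rw [e] at h1
    have h2 := h1 ((Re_iff hs hl _).2 (Or.inr ⟨L_long hji hd.neg hc, hyz⟩))
    exact hi (hJL hji hd.neg hc ⟨_, h2⟩ hj)
  have hJ1 : J ≠ ∅ := Set.nonempty_iff_ne_empty.1 ⟨a, haJ⟩
  have hJ2 : J ≠ Set.univ := (Set.ne_univ_iff_exists_notMem _).2 ⟨b, hbJ⟩
  have hZ1n : (Λs \ Z₂).Nonempty := by
    obtain ⟨y, hy⟩ := hβ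
    exact ⟨y, hΛs hd hy, hout hbJ hd hy⟩
  have hZ2n : Z₂.Nonempty := by
    obtain ⟨y, hy⟩ := hα
    exact ⟨y, hΛs hc hy, a, haJ, c, hc, y, hy, by simp⟩
  have hZ1 : ∀ z ∈ Λs \ Z₂, ∀ h ∈ L, z + h ∈ Λs \ Z₂ := by
    rintro z ⟨hz, hz'⟩ h hh
    refine ⟨hadd z hz h hh, fun hcon => hz' ?_⟩
    have := hZ2 _ hcon _ (L.neg_mem hh)
    rwa [add_neg_cancel_right] at this
  have hdis : Disjoint (Λs \ Z₂) Z₂ := Set.disjoint_sdiff_left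
  have hun : Λs = (Λs \ Z₂) ∪ Z₂ := by
    rw [Set.sdiff_union_self]
    exact (Set.union_eq_left.2 (fun y hy => hy.1)).symm
  refine ⟨J, Λs \ Z₂, Z₂, hJ1, hJ2, hZ1n, hZ2n, hdis, hZ1, hZ2, hun, ?_⟩
  have G := good_J hJ1 hJ2 hZ1n hZ2n hdis hZ1 hZ2 hun htwo
  refine (hmax _ (Form_closed G hn hs hl) ?_).symm
  rintro ⟨v, y⟩ hx
  rcases (Re_iff hs hl _).1 (hΨR hx) with ⟨h1, h2⟩ | ⟨h1, h2⟩
  · obtain ⟨i, c, hc, e⟩ := (short_iff _).1 h1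
    dsimp only at e
    subst e
    refine Or.inl ⟨i, ⟨c, hc, rfl⟩, ?_⟩
    by_cases hi : i ∈ J
    · exact Or.inr ⟨hi, h2, i, hi, c, hc, y, hx, by simp⟩
    · exact Or.inl ⟨hi, h2, hout hi hc hx⟩
  · obtain ⟨p, q, hpq, c, d, hc, hd, e⟩ := h1
    dsimp only at e
    subst e
    refine Or.inr ⟨⟨p, q, hpq, ?_, c, d, hc, hd, rfl⟩, h2⟩
    have hpq' := hJL hpq hc hd ⟨y, hx⟩
    have hqp' := hJL hpq.symm hd hc ⟨y, by rwa [add_comm]⟩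
    simp only [rJ]
    tauto

end

/-- Theorem 4.3 (type `B_n`): maximal closed subroot systems with semi-closed
gradient. -/
theorem statement12 {Y : Type*} [AddCommGroup Y] [Module ℝ Y] [FiniteDimensional ℝ Y]
    {n : ℕ} (hn : 2 ≤ n) (Λ : E n → Set Y) (Λs : Set Y) (Λl : AddSubgroup Y)
    (hED : IsExtensionDatum (Bn n) Λ)
    (hs : ∀ α ∈ shortBC n, Λ α = Λs) (hl : ∀ α ∈ longBC n, Λ α = (Λl : Set Y))
    (hls : (Λl : Set Y) ⊆ Λs)
    (Ψ : Set (E n × Y)) :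
    (IsMaxClosedSubSys (PhiRe (Bn n) Λ) Ψ ∧
        IsSemiClosedSubRS (Bn n) (shortBC n) (longBC n) ∅ (Gr Ψ)) ↔
      ∃ (J : Set (Fin n)) (Z₁ Z₂ : Set Y),
        J ≠ ∅ ∧ J ≠ Set.univ ∧ Z₁.Nonempty ∧ Z₂.Nonempty ∧ Disjoint Z₁ Z₂ ∧
        (∀ z ∈ Z₁, ∀ h ∈ Λl, z + h ∈ Z₁) ∧ (∀ z ∈ Z₂, ∀ h ∈ Λl, z + h ∈ Z₂) ∧
        Λs = Z₁ ∪ Z₂ ∧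
        Ψ = {x | (∃ i, i ∉ J ∧ (x.1 = eps i ∨ x.1 = -eps i)) ∧ x.2 ∈ Z₁} ∪
            {x | (∃ j, j ∈ J ∧ (x.1 = eps j ∨ x.1 = -eps j)) ∧ x.2 ∈ Z₂} ∪
            {x | (∃ p q, p ≠ q ∧ ((p ∈ J ∧ q ∈ J) ∨ (p ∉ J ∧ q ∉ J)) ∧
              ∃ c d : ℝ, (c = 1 ∨ c = -1) ∧ (d = 1 ∨ d = -1) ∧
                x.1 = c • eps p + d • eps q) ∧ x.2 ∈ Λl} := by
  constructor
  · rintro ⟨hM, hG⟩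
    obtain ⟨J, Z₁, Z₂, h1, h2, h3, h4, h5, h6, h7, h8, h9⟩ := exists_J hn hED hs hl hM hG
    exact ⟨J, Z₁, Z₂, h1, h2, h3, h4, h5, h6, h7, h8, h9.trans (Form_eq J Z₁ Z₂).symm⟩
  · rintro ⟨J, Z₁, Z₂, h1, h2, h3, h4, h5, h6, h7, h8, h9⟩
    rw [Form_eq] at h9
    subst h9
    have G := good_J h1 h2 h3 h4 h5 h6 h7 h8 (ED_two hn hED hs hl)
    exact ⟨⟨Form_closed G hn hs hl, fun P hP hsub => Form_max G hs hl P hP hsub⟩,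
      Form_semi G hn⟩

end BdS
end
end

section
/- Let Φ̊ be a reduced irreducible root system in V in which all roots have the same length and with |Φ̊| > 2 (i.e. Φ̊ is simply-laced and not of type A₁), let (Λ_α) be an extension datum of type (Φ̊, Y), and let Φ^re be the associated set of real roots. Then Λ_α equals one fixed subset Λ for all α ∈ Φ̊, and Λ is an additive subgroup of Y. Moreover, Ψ ⊆ Φ^re is a maximal closed subroot system with Gr(Ψ) = Φ̊ if and only if there exist a maximal proper subgroup H of Λ and a ℤ-linear map τ : Φ̊ → Λ/H such that Ψ = {α ⊕ y : α ∈ Φ̊, y ∈ Λ, y + H = τ(α)}. -/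
open scoped RealInnerProductSpace Pointwise

noncomputable section

namespace BdS

variable {V Y : Type*} [NormedAddCommGroup V] [InnerProductSpace ℝ V]
variable [AddCommGroup Y] [Module ℝ Y]

/-! ### Helper lemmas -/

section helpers

/-- The rank-two facts about a simply-laced root system used below. -/
structure SL (Φ : Set V) : Prop where
  ne : ∀ α ∈ Φ, α ≠ 0
  refl : ∀ α ∈ Φ, ∀ β ∈ Φ, reflRoot α β ∈ Φ
  int : ∀ α ∈ Φ, ∀ β ∈ Φ, ∃ m : ℤ, pairing β α = (m : ℝ)
  len : ∀ α ∈ Φ, ∀ β ∈ Φ, ⟪α, α⟫ = ⟪β, β⟫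
  irr : IsIrreducible Φ
  card : 2 < Φ.ncard

lemma SL.pos {Φ : Set V} (h : SL Φ) {α : V} (hα : α ∈ Φ) : 0 < ⟪α, α⟫ :=
  real_inner_self_pos.2 (h.ne α hα)

lemma SL.self {Φ : Set V} (h : SL Φ) {α : V} (hα : α ∈ Φ) : pairing α α = 2 := by
  have := (h.pos hα).ne'
  unfold pairing
  field_simp

lemma SL.symm {Φ : Set V} (h : SL Φ) {α β : V} (hα : α ∈ Φ) (hβ : β ∈ Φ) :
    pairing α β = pairing β α := by
  unfold pairing
  rw [h.len α hα β hβ, real_inner_comm]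

lemma SL.neg {Φ : Set V} (h : SL Φ) {α : V} (hα : α ∈ Φ) : -α ∈ Φ := by
  have := h.refl α hα α hα
  rw [reflRoot, h.self hα] at this
  convert this using 1
  rw [two_smul]; abel

lemma pairing_neg_left (α β : V) : pairing (-β) α = - pairing β α := by
  unfold pairing
  rw [inner_neg_left]; ring

lemma SL.neg_of_inner_neg {Φ : Set V} (h : SL Φ) {α β : V} (hα : α ∈ Φ) (hβ : β ∈ Φ)
    (hi : ⟪β, α⟫ < 0) : pairing β α = -1 ∨ β = -α := by
  obtain ⟨m, hm⟩ := h.int α hα β hβ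
  have hp := h.pos hα
  have hl := h.len α hα β hβ
  have e : 2 * ⟪β, α⟫ = m * ⟪α, α⟫ := by
    rw [← hm, pairing]; field_simp
  have hsq : ⟪β + α, β + α⟫ = (2 + m) * ⟪α, α⟫ := by
    rw [inner_add_left, inner_add_right, inner_add_right, real_inner_comm β α, ← hl]
    linarith
  have hm0 : m < 0 := by
    have : (m : ℝ) < 0 := by nlinarith
    exact_mod_cast this
  have hm2 : -2 ≤ m := by
    have h0 : 0 ≤ ⟪β + α, β + α⟫ := real_inner_self_nonneg
    have : (-2 : ℝ) ≤ m := by nlinarith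
    exact_mod_cast this
  have : m = -1 ∨ m = -2 := by omega
  rcases this with rfl | rfl
  · left; rw [hm]; norm_num
  · right
    have : ⟪β + α, β + α⟫ = 0 := by rw [hsq]; norm_num
    exact eq_neg_of_add_eq_zero_left (inner_self_eq_zero.1 this)

lemma SL.neighbor {Φ : Set V} (h : SL Φ) {α : V} (hα : α ∈ Φ) :
    ∃ β ∈ Φ, pairing β α = -1 := by
  by_contra hc
  push Not at hc
  have key : ∀ β ∈ Φ, β ≠ α → β ≠ -α → ⟪α, β⟫ = 0 := by
    intro β hβ h1 h2
    rw [real_inner_comm]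
    rcases lt_trichotomy ⟪β, α⟫ 0 with hi | hi | hi
    · rcases h.neg_of_inner_neg hα hβ hi with h3 | h3
      · exact absurd h3 (hc β hβ)
      · exact absurd h3 h2
    · exact hi
    · have hi' : ⟪-β, α⟫ < 0 := by rw [inner_neg_left]; linarith
      rcases h.neg_of_inner_neg hα (h.neg hβ) hi' with h3 | h3
      · exact absurd h3 (hc _ (h.neg hβ))
      · exact absurd (neg_injective h3) h1
  have := h.irr {α, -α} {β ∈ Φ | β ≠ α ∧ β ≠ -α} (by
      ext x
      simp only [Set.mem_union, Set.mem_insert_iff, Set.mem_singleton_iff, Set.mem_ofPred_eq]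
      constructor
      · intro hx; tauto
      · rintro ((rfl | rfl) | hx)
        · exact hα
        · exact h.neg hα
        · exact hx.1) (by
      rintro x (rfl | rfl) y ⟨hy, h1, h2⟩
      · exact key y hy h1 h2
      · rw [inner_neg_left, key y hy h1 h2, neg_zero])
  rcases this with h1 | h1
  · exact absurd h1 (Set.insert_nonempty _ _).ne_empty
  · have hsub : Φ ⊆ {α, -α} := by
      intro x hx
      by_contra hx'
      simp only [Set.mem_insert_iff, Set.mem_singleton_iff, not_or] at hx'
      have : x ∈ {β ∈ Φ | β ≠ α ∧ β ≠ -α} := ⟨hx, hx'⟩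
      rw [h1] at this
      exact this
    have h2 := Set.ncard_le_ncard hsub (by simp)
    have h3 := Set.ncard_insert_le α {-α}
    rw [Set.ncard_singleton] at h3
    have := h.card
    omega

/-- The coset structure of a reflection-compatible family. -/
lemma SL.coset {Φ : Set V} (h : SL Φ) (Z : V → Set Y) (hne : ∀ α ∈ Φ, (Z α).Nonempty)
    (hZ : ∀ α ∈ Φ, ∀ β ∈ Φ, ∀ z ∈ Z α, ∀ y ∈ Z β, y - pairing β α • z ∈ Z (reflRoot α β)) :
    ∃ H : AddSubgroup Y, ∀ α ∈ Φ, ∀ z ∈ Z α, ∀ y, y ∈ Z α ↔ y - z ∈ H := by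
  let D : V → Set Y := fun α => {d | ∃ y ∈ Z α, ∃ y' ∈ Z α, d = y - y'}
  have hadd : ∀ α ∈ Φ, ∀ β ∈ Φ, pairing β α = -1 → α + β ∈ Φ ∧
      ∀ z ∈ Z α, ∀ y ∈ Z β, y + z ∈ Z (α + β) := by
    intro α hα β hβ hp
    have hr : reflRoot α β = α + β := by rw [reflRoot, hp, neg_one_smul]; abel
    refine ⟨hr ▸ h.refl α hα β hβ, fun z hz y hy => ?_⟩
    have := hZ α hα β hβ z hz y hy
    rw [hr, hp, neg_one_smul, sub_neg_eq_add] at this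
    exact this
  have hpre : ∀ α ∈ Φ, ∀ β ∈ Φ, pairing β α = -1 → ∀ z ∈ Z α, ∀ d ∈ D β, z + d ∈ Z α := by
    rintro α hα β hβ hp z hz _ ⟨b, hb, b', hb', rfl⟩
    obtain ⟨h1, h2⟩ := hadd α hα β hβ hp
    have hp' : pairing (α + β) β = 1 := by
      have e : pairing (α + β) β = pairing α β + pairing β β := by
        unfold pairing; rw [inner_add_left]; ring
      rw [e, h.self hβ, h.symm hα hβ, hp]; norm_num
    have h3 := hZ β hβ (α + β) h1 b' hb' _ (h2 z hz b hb)
    rw [reflRoot, hp', one_smul, one_smul, add_sub_cancel_right] at h3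
    convert h3 using 1
    abel
  have hDle : ∀ α ∈ Φ, ∀ β ∈ Φ, pairing β α = -1 → D β ⊆ D α := by
    intro α hα β hβ hp d hd
    obtain ⟨z, hz⟩ := hne α hα
    exact ⟨z + d, hpre α hα β hβ hp z hz d hd, z, hz, by abel⟩
  have hDeq : ∀ α ∈ Φ, ∀ β ∈ Φ, pairing β α = -1 → D β = D α := fun α hα β hβ hp =>
    (hDle α hα β hβ hp).antisymm (hDle β hβ α hα (by rw [h.symm hα hβ, hp]))
  have hnegle : ∀ β ∈ Φ, D β ⊆ D (-β) := by
    rintro β hβ _ ⟨y, hy, y', hy', rfl⟩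
    have hr : reflRoot β β = -β := by rw [reflRoot, h.self hβ, two_smul]; abel
    have h1 := hZ β hβ β hβ y' hy' y hy
    have h2 := hZ β hβ β hβ y' hy' y' hy'
    rw [hr] at h1 h2
    exact ⟨_, h1, _, h2, by abel⟩
  have hneg : ∀ β ∈ Φ, D (-β) = D β := fun β hβ =>
    Set.Subset.antisymm (by simpa using hnegle (-β) (h.neg hβ)) (hnegle β hβ)
  have hself : ∀ α ∈ Φ, ∀ z ∈ Z α, ∀ d ∈ D α, z + d ∈ Z α := by
    intro α hα z hz d hd
    obtain ⟨β, hβ, hp⟩ := h.neighbor hα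
    exact hpre α hα β hβ hp z hz d (by rw [hDeq α hα β hβ hp]; exact hd)
  have hconn : ∀ α ∈ Φ, ∀ β ∈ Φ, ⟪β, α⟫ ≠ 0 → D β = D α := by
    intro α hα β hβ hi
    rcases lt_or_gt_of_ne hi with hi | hi
    · rcases h.neg_of_inner_neg hα hβ hi with h3 | h3
      · exact hDeq α hα β hβ h3
      · rw [h3]; exact hneg α hα
    · have hi' : ⟪-β, α⟫ < 0 := by rw [inner_neg_left]; linarith
      rcases h.neg_of_inner_neg hα (h.neg hβ) hi' with h3 | h3
      · rw [← hneg β hβ]; exact hDeq α hα _ (h.neg hβ) h3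
      · rw [neg_injective h3]
  have hΦne : Φ.Nonempty := by
    rw [Set.nonempty_iff_ne_empty]; rintro rfl
    have := h.card; simp at this
  obtain ⟨α₀, hα₀⟩ := hΦne
  have hall : ∀ α ∈ Φ, D α = D α₀ := by
    rcases h.irr {α ∈ Φ | D α = D α₀} {α ∈ Φ | D α ≠ D α₀} (by
        ext x; simp only [Set.mem_union, Set.mem_ofPred_eq]; tauto) (by
        rintro x ⟨hx, hx'⟩ y ⟨hy, hy'⟩
        by_contra hi
        exact hy' ((hconn y hy x hx hi).symm.trans hx')) with h1 | h1
    · exfalso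
      have : α₀ ∈ {α ∈ Φ | D α = D α₀} := ⟨hα₀, rfl⟩
      rw [h1] at this; exact this
    · intro α hα
      by_contra hc
      have : α ∈ {α ∈ Φ | D α ≠ D α₀} := ⟨hα, hc⟩
      rw [h1] at this; exact this
  refine ⟨{ carrier := D α₀, zero_mem' := ?_, add_mem' := ?_, neg_mem' := ?_ }, ?_⟩
  · rintro _ d ⟨y, hy, y', hy', rfl⟩ hd
    exact ⟨y + d, hself α₀ hα₀ y hy d hd, y', hy', by abel⟩
  · obtain ⟨z, hz⟩ := hne α₀ hα₀
    exact ⟨z, hz, z, hz, by simp⟩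
  · rintro _ ⟨y, hy, y', hy', rfl⟩
    exact ⟨y', hy', y, hy, by abel⟩
  · intro α hα z hz y
    change _ ↔ y - z ∈ D α₀
    rw [← hall α hα]
    constructor
    · intro hy; exact ⟨y, hy, z, hz, rfl⟩
    · intro hd
      have := hself α hα z hz _ hd
      simpa using this

/-- The set attached to `(G, H, τ)`. -/
def PsiSet (Φ : Set V) (G H : AddSubgroup Y) (τ : AddSubgroup.closure Φ →+ Y) : Set (V × Y) :=
  {x | ∃ h : x.1 ∈ Φ, x.2 ∈ G ∧ x.2 - τ ⟨x.1, AddSubgroup.subset_closure h⟩ ∈ H}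

/-- Relations among roots: a list of elements of `Ψ` whose gradients sum to zero. -/
lemma SL.list {Φ : Set V} (h : SL Φ) (Ψ : Set (V × Y)) (H : AddSubgroup Y)
    (hsub : ∀ x ∈ Ψ, x.1 ∈ Φ) (hrefl : ∀ a ∈ Ψ, ∀ x ∈ Ψ, reflAff a x ∈ Ψ)
    (hopp : ∀ a ∈ Ψ, ∀ b ∈ Ψ, b.1 = -a.1 → a.2 + b.2 ∈ H) :
    ∀ (n : ℕ) (l : List (V × Y)), l.length = n → (∀ x ∈ l, x ∈ Ψ) → l.sum.1 = 0 →
      l.sum.2 ∈ H := by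
  intro n
  induction n using Nat.strong_induction_on with
  | _ n ih =>
    intro l hn hl hs
    rcases l with _ | ⟨a, l⟩
    · simp
    have haΨ : a ∈ Ψ := hl a (by simp)
    have ha := hsub a haΨ
    have hex : ∃ b ∈ l, ⟪b.1, a.1⟫ < 0 := by
      by_contra hc
      push Not at hc
      have hnn : ∀ l' : List (V × Y), (∀ b ∈ l', 0 ≤ ⟪b.1, a.1⟫) → 0 ≤ ⟪l'.sum.1, a.1⟫ := by
        intro l'
        induction l' with
        | nil => intro _; simp
        | cons c l' ih' =>
          intro hh
          rw [List.sum_cons, Prod.fst_add, inner_add_left]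
          have := hh c (by simp)
          have := ih' (fun b hb => hh b (by simp [hb]))
          linarith
      have h1 := hnn l hc
      have h2 : ⟪(a :: l).sum.1, a.1⟫ = 0 := by rw [hs]; simp
      rw [List.sum_cons, Prod.fst_add, inner_add_left] at h2
      have := h.pos ha
      linarith
    obtain ⟨b, hb, hi⟩ := hex
    obtain ⟨l₁, l₂, rfl⟩ := List.append_of_mem hb
    have hbΨ : b ∈ Ψ := hl b (by simp)
    have hsum : (a :: (l₁ ++ b :: l₂)).sum = (a + b) + (l₁ ++ l₂).sum := by
      simp only [List.sum_cons, List.sum_append]; abel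
    have hl' : ∀ x ∈ l₁ ++ l₂, x ∈ Ψ := by
      intro x hx
      apply hl
      simp only [List.mem_append, List.mem_cons] at hx ⊢
      tauto
    simp only [List.length_cons, List.length_append] at hn
    rw [hsum] at hs ⊢
    rcases h.neg_of_inner_neg ha (hsub b hbΨ) hi with hp | hp
    · have hab : a + b ∈ Ψ := by
        have := hrefl a haΨ b hbΨ
        rw [reflAff, reflRoot, hp, neg_one_smul, neg_one_smul] at this
        convert this using 1
        ext <;> simp <;> abel
      have := ih (l₁.length + l₂.length + 1) (by omega) ((a + b) :: (l₁ ++ l₂))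
        (by simp only [List.length_cons, List.length_append])
        (by
          intro x hx
          rcases List.mem_cons.1 hx with rfl | hx
          · exact hab
          · exact hl' x hx) (by rw [List.sum_cons]; exact hs)
      rw [List.sum_cons] at this
      exact this
    · have hs' : (l₁ ++ l₂).sum.1 = 0 := by
        rw [Prod.fst_add, Prod.fst_add, hp, add_neg_cancel, zero_add] at hs
        exact hs
      have h1 := ih _ (by simp only [List.length_append]; omega) (l₁ ++ l₂) rfl hl' hs'
      rw [Prod.snd_add, Prod.snd_add]
      exact H.add_mem (hopp a haΨ b hbΨ hp) h1

lemma exists_list_of_closure {A : Type*} [AddCommGroup A] (S : Set A) (hS : ∀ x ∈ S, -x ∈ S)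
    (x : A) (hx : x ∈ AddSubgroup.closure S) : ∃ l : List A, (∀ y ∈ l, y ∈ S) ∧ l.sum = x := by
  induction hx using AddSubgroup.closure_induction with
  | mem x hx => exact ⟨[x], by simpa using hx, by simp⟩
  | zero => exact ⟨[], by simp, by simp⟩
  | add x y _ _ hx hy =>
    obtain ⟨l, hl, rfl⟩ := hx
    obtain ⟨l', hl', rfl⟩ := hy
    refine ⟨l ++ l', fun y hy => ?_, by simp⟩
    rcases List.mem_append.1 hy with h | h
    · exact hl y h
    · exact hl' y h
  | neg x hcl hx =>
    obtain ⟨l, hl, rfl⟩ := hx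
    refine ⟨l.map (fun x => -x), fun y hy => ?_, ?_⟩
    · obtain ⟨z, hz, rfl⟩ := List.mem_map.1 hy
      exact hS z (hl z hz)
    · clear hl hcl
      induction l with
      | nil => simp
      | cons a l ih => rw [List.map_cons, List.sum_cons, List.sum_cons, ih, neg_add]

/-- Structure of subroot systems with full gradient. -/
lemma SL.struct {Φ : Set V} (h : SL Φ) (hfin : Φ.Finite) (G : AddSubgroup Y) (Ψ : Set (V × Y))
    (hsub : ∀ x ∈ Ψ, x.1 ∈ Φ ∧ x.2 ∈ G) (hrefl : ∀ a ∈ Ψ, ∀ x ∈ Ψ, reflAff a x ∈ Ψ)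
    (hGr : Gr Ψ = Φ) :
    ∃ (H : AddSubgroup Y) (τ : AddSubgroup.closure Φ →+ Y), H ≤ G ∧ (∀ x, τ x ∈ G) ∧
      Ψ = PsiSet Φ G H τ := by
  have hne : ∀ α ∈ Φ, (Zset Ψ α).Nonempty := by
    intro α hα
    rw [← hGr] at hα
    exact hα
  obtain ⟨H, hH⟩ := h.coset (Zset Ψ) hne (fun α hα β hβ z hz y hy => hrefl (α, z) hz (β, y) hy)
  have hΦne : Φ.Nonempty := by
    rw [Set.nonempty_iff_ne_empty]; rintro rfl
    have := h.card; simp at this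
  obtain ⟨α₀, hα₀⟩ := hΦne
  have hHG : H ≤ G := by
    intro d hd
    obtain ⟨z, hz⟩ := hne α₀ hα₀
    have : z + d ∈ Zset Ψ α₀ := (hH α₀ hα₀ z hz (z + d)).2 (by simpa using hd)
    simpa using G.sub_mem (hsub _ this).2 (hsub _ hz).2
  have hneg' : ∀ a ∈ Ψ, (-a.1, -a.2) ∈ Ψ := by
    intro a ha
    have := hrefl a ha a ha
    rw [reflAff, reflRoot, h.self (hsub a ha).1, two_smul, two_smul] at this
    convert this using 1
    ext <;> simp
  have hopp : ∀ a ∈ Ψ, ∀ b ∈ Ψ, b.1 = -a.1 → a.2 + b.2 ∈ H := by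
    rintro ⟨a, y⟩ ha ⟨b, z⟩ hb hab
    simp only at hab
    subst hab
    have := (hH (-a) (hsub _ hb).1 (-y) (hneg' _ ha) z).1 hb
    simpa [add_comm] using this
  let Γ := AddSubgroup.closure Ψ
  have hΓ0 : ∀ y : Y, ((0 : V), y) ∈ Γ → y ∈ H := by
    intro y hy
    obtain ⟨l, hl, hs⟩ := exists_list_of_closure Ψ hneg' _ hy
    have := h.list Ψ H (fun x hx => (hsub x hx).1) hrefl hopp _ l rfl hl (by rw [hs])
    rwa [hs] at this
  have hΓG : ∀ x ∈ Γ, x.2 ∈ G := by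
    intro x hx
    have : Γ ≤ G.comap (AddMonoidHom.snd V Y) := by
      rw [AddSubgroup.closure_le]
      intro x hx
      exact (hsub x hx).2
    exact this hx
  have hΓs : ∀ v ∈ AddSubgroup.closure Φ, ∃ y, (v, y) ∈ Γ := by
    intro v hv
    have : AddSubgroup.closure Φ ≤ Γ.map (AddMonoidHom.fst V Y) := by
      rw [AddSubgroup.closure_le]
      intro α hα
      obtain ⟨z, hz⟩ := hne α hα
      exact ⟨(α, z), AddSubgroup.subset_closure hz, rfl⟩
    obtain ⟨⟨v', y⟩, hx, rfl⟩ := this hv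
    exact ⟨y, hx⟩
  have : AddGroup.FG (AddSubgroup.closure Φ) := by
    rw [AddGroup.fg_iff_addSubgroup_fg]
    exact ⟨hfin.toFinset, by simp⟩
  have : Module.Finite ℤ (AddSubgroup.closure Φ) := Module.Finite.iff_addGroup_fg.2 this
  have : IsAddTorsionFree V := .of_isTorsionFree ℝ V
  have : Module.IsTorsionFree ℤ (AddSubgroup.closure Φ) := inferInstance
  have : Module.Free ℤ (AddSubgroup.closure Φ) := inferInstance
  let b := Module.Free.chooseBasis ℤ (AddSubgroup.closure Φ)
  choose t ht using fun i => hΓs (b i) (b i).2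
  let τ : AddSubgroup.closure Φ →ₗ[ℤ] Y := b.constr ℤ t
  have hτ : ∀ x : AddSubgroup.closure Φ, ((x : V), τ x) ∈ Γ := by
    intro x
    have hx : x ∈ Submodule.span ℤ (Set.range b) := by rw [b.span_eq]; trivial
    induction hx using Submodule.span_induction with
    | zero => rw [map_zero]; exact Γ.zero_mem
    | add x y _ _ hx hy => simpa using Γ.add_mem hx hy
    | smul c x _ hx =>
      have := Γ.zsmul_mem hx c
      simpa using this
    | mem x hx =>
      obtain ⟨i, rfl⟩ := hx
      have : τ (b i) = t i := b.constr_basis ℤ t i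
      rw [this]; exact ht i
  refine ⟨H, τ.toAddMonoidHom, hHG, fun x => hΓG _ (hτ x), ?_⟩
  have hmem : ∀ (α : V) (hα : α ∈ Φ) (y : Y), (α, y) ∈ Ψ →
      y - τ ⟨α, AddSubgroup.subset_closure hα⟩ ∈ H := by
    intro α hα y hy
    apply hΓ0
    have := Γ.sub_mem (AddSubgroup.subset_closure hy) (hτ ⟨α, AddSubgroup.subset_closure hα⟩)
    simpa using this
  ext ⟨α, y⟩
  constructor
  · intro hx
    exact ⟨(hsub _ hx).1, (hsub _ hx).2, hmem α (hsub _ hx).1 y hx⟩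
  · rintro ⟨hα, hy, hyH⟩
    obtain ⟨z, hz⟩ := hne α hα
    refine (hH α hα z hz y).2 ?_
    have := H.sub_mem hyH (hmem α hα z hz)
    simpa using this

lemma SL.psi_closed {Φ : Set V} (h : SL Φ) (G K : AddSubgroup Y) (hKG : K ≤ G) (hK : K ≠ G)
    (τ : AddSubgroup.closure Φ →+ Y) (hτ : ∀ x, τ x ∈ G) (Λ : V → Set Y)
    (hΛ : ∀ α ∈ Φ, Λ α = (G : Set Y)) :
    IsClosedSubSys (PhiRe Φ Λ) (PsiSet Φ G K τ) := by
  have hΦne : Φ.Nonempty := by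
    rw [Set.nonempty_iff_ne_empty]; rintro rfl
    have := h.card; simp at this
  obtain ⟨α₀, hα₀⟩ := hΦne
  refine ⟨⟨?_, ?_, ?_, ?_⟩, ?_⟩
  · exact ⟨(α₀, τ ⟨α₀, AddSubgroup.subset_closure hα₀⟩), hα₀, hτ _, by simp⟩
  · rintro ⟨α, y⟩ ⟨hα, hy, -⟩
    refine ⟨hα, ?_⟩
    simp only at hα
    simp only [hΛ α hα]
    exact hy
  · intro he
    apply hK
    refine le_antisymm hKG fun g hg => ?_
    have : (α₀, τ ⟨α₀, AddSubgroup.subset_closure hα₀⟩ + g) ∈ PsiSet Φ G K τ := by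
      rw [he]
      refine ⟨hα₀, ?_⟩
      simp only [hΛ α₀ hα₀]
      exact G.add_mem (hτ _) hg
    obtain ⟨_, _, h3⟩ := this
    simpa using h3
  · rintro ⟨α, y⟩ ⟨hα, hy, hyK⟩ ⟨β, z⟩ ⟨hβ, hz, hzK⟩
    simp only at hα hβ hy hz hyK hzK
    obtain ⟨m, hm⟩ := h.int α hα β hβ
    refine ⟨h.refl α hα β hβ, ?_, ?_⟩
    · simp only [reflAff, hm, Int.cast_smul_eq_zsmul]
      exact G.sub_mem hz (G.zsmul_mem hy m)
    · have e : (⟨reflRoot α β, AddSubgroup.subset_closure (h.refl α hα β hβ)⟩ :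
          AddSubgroup.closure Φ) = ⟨β, AddSubgroup.subset_closure hβ⟩ -
          m • ⟨α, AddSubgroup.subset_closure hα⟩ := by
        ext
        simp [reflRoot, hm, Int.cast_smul_eq_zsmul]
      simp only [reflAff, hm, Int.cast_smul_eq_zsmul]
      rw [e, map_sub, map_zsmul]
      have := K.sub_mem hzK (K.zsmul_mem hyK m)
      rw [zsmul_sub] at this
      convert this using 1
      abel
  · rintro ⟨α, y⟩ ⟨hα, hy, hyK⟩ ⟨β, z⟩ ⟨hβ, hz, hzK⟩ ⟨hs, _⟩
    simp only at hα hβ hy hz hyK hzK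
    refine ⟨hs, G.add_mem hy hz, ?_⟩
    have e : (⟨α + β, AddSubgroup.subset_closure hs⟩ :
          AddSubgroup.closure Φ) = ⟨α, AddSubgroup.subset_closure hα⟩ +
          ⟨β, AddSubgroup.subset_closure hβ⟩ := rfl
    have := K.add_mem hyK hzK
    change y + z - τ ⟨α + β, AddSubgroup.subset_closure hs⟩ ∈ K
    rw [e, map_add]
    convert this using 1
    abel

lemma psiSet_top {Φ : Set V} (G : AddSubgroup Y)
    (τ : AddSubgroup.closure Φ →+ Y) (hτ : ∀ x, τ x ∈ G) (Λ : V → Set Y)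
    (hΛ : ∀ α ∈ Φ, Λ α = (G : Set Y)) : PsiSet Φ G G τ = PhiRe Φ Λ := by
  ext ⟨α, y⟩
  constructor
  · rintro ⟨hα, hy, -⟩
    refine ⟨hα, ?_⟩
    simp only at hα
    simp only [hΛ α hα]; exact hy
  · rintro ⟨hα, hy⟩
    simp only at hα
    simp only [hΛ α hα] at hy
    exact ⟨hα, hy, G.sub_mem hy (hτ _)⟩

lemma gr_psiSet {Φ : Set V} (G H : AddSubgroup Y)
    (τ : AddSubgroup.closure Φ →+ Y) (hτ : ∀ x, τ x ∈ G) : Gr (PsiSet Φ G H τ) = Φ := by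
  ext α
  constructor
  · rintro ⟨y, hα, -⟩; exact hα
  · intro hα
    exact ⟨τ ⟨α, AddSubgroup.subset_closure hα⟩, hα, hτ _, by simp⟩

end helpers

/-- Theorem 5.1 (simply-laced case): maximal closed subroot systems with full
gradient.  The ℤ-linear map `τ : Φ̊ → Λ/H` is encoded by a lift
`τ : ⟨Φ̊⟩ →+ Y` with values in `Λ`. -/
theorem statement13 {V Y : Type*} [NormedAddCommGroup V] [InnerProductSpace ℝ V]
    [FiniteDimensional ℝ V] [AddCommGroup Y] [Module ℝ Y] [FiniteDimensional ℝ Y]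
    (Φ : Set V) (hΦ : IsRootSystem Φ) (hred : IsReduced Φ) (hirr : IsIrreducible Φ)
    (hlen : ∀ α ∈ Φ, ∀ β ∈ Φ, ⟪α, α⟫ = ⟪β, β⟫) (hcard : 2 < Φ.ncard)
    (Λ : V → Set Y) (hED : IsExtensionDatum Φ Λ) :
    (∃ G : AddSubgroup Y, ∀ α ∈ Φ, Λ α = (G : Set Y)) ∧
    ∀ G : AddSubgroup Y, (∀ α ∈ Φ, Λ α = (G : Set Y)) →
      ∀ Ψ : Set (V × Y),
        (IsMaxClosedSubSys (PhiRe Φ Λ) Ψ ∧ Gr Ψ = Φ) ↔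
        ∃ (H : AddSubgroup Y) (τ : AddSubgroup.closure Φ →+ Y),
          H ≤ G ∧ H ≠ G ∧ (∀ K : AddSubgroup Y, H ≤ K → K ≤ G → K = H ∨ K = G) ∧
          (∀ x, τ x ∈ G) ∧
          Ψ = {x | ∃ h : x.1 ∈ Φ,
            x.2 ∈ G ∧ x.2 - τ ⟨x.1, AddSubgroup.subset_closure h⟩ ∈ H} := by
  obtain ⟨hfin, h0, -, hrefl, hint⟩ := hΦ
  have h : SL Φ := ⟨fun α hα e => h0 (e ▸ hα), hrefl, hint, hlen, hirr, hcard⟩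
  obtain ⟨hE1, -, hE3, -, -⟩ := hED
  have hnd : ∀ α ∈ Φ, α ∈ ndSet Φ := by
    intro α hα
    refine ⟨hα, fun hd => ?_⟩
    have h1 := hlen α hα _ hd.2
    rw [real_inner_smul_left, real_inner_smul_right] at h1
    have := h.pos hα
    linarith
  have hΦne : Φ.Nonempty := by
    rw [Set.nonempty_iff_ne_empty]; rintro rfl
    simp at hcard
  obtain ⟨α₀, hα₀⟩ := hΦne
  refine ⟨?_, ?_⟩
  · obtain ⟨G, hG⟩ := h.coset Λ (fun α hα => ⟨0, hE3 α (hnd α hα)⟩) hE1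
    refine ⟨G, fun α hα => ?_⟩
    ext y
    rw [hG α hα 0 (hE3 α (hnd α hα)) y, sub_zero]
    rfl
  intro G hG Ψ
  have hsubG : ∀ Ψ' : Set (V × Y), Ψ' ⊆ PhiRe Φ Λ → ∀ x ∈ Ψ', x.1 ∈ Φ ∧ x.2 ∈ G := by
    intro Ψ' hs x hx
    obtain ⟨h1, h2⟩ := hs hx
    rw [hG _ h1] at h2
    exact ⟨h1, h2⟩
  constructor
  · rintro ⟨⟨⟨⟨hne, hs, hprop, hr⟩, hcl⟩, hmax⟩, hGr⟩
    obtain ⟨H, τ, hHG, hτ, rfl⟩ := h.struct hfin G Ψ (hsubG Ψ hs) hr hGr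
    refine ⟨H, τ, hHG, ?_, ?_, hτ, rfl⟩
    · rintro rfl
      exact hprop (psiSet_top H τ hτ Λ hG)
    · intro K hHK hKG
      by_cases hK : K = G
      · exact Or.inr hK
      left
      have he := hmax (PsiSet Φ G K τ) (h.psi_closed G K hKG hK τ hτ Λ hG)
        (fun x ⟨h1, h2, h3⟩ => ⟨h1, h2, hHK h3⟩)
      refine le_antisymm (fun k hk => ?_) hHK
      have : (α₀, τ ⟨α₀, AddSubgroup.subset_closure hα₀⟩ + k) ∈ PsiSet Φ G H τ := by
        rw [← he]
        exact ⟨hα₀, G.add_mem (hτ _) (hKG hk), by simpa using hk⟩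
      obtain ⟨_, _, h3⟩ := this
      simpa using h3
  · rintro ⟨H, τ, hHG, hHne, hmax, hτ, rfl⟩
    change IsMaxClosedSubSys (PhiRe Φ Λ) (PsiSet Φ G H τ) ∧ Gr (PsiSet Φ G H τ) = Φ
    refine ⟨⟨h.psi_closed G H hHG hHne τ hτ Λ hG, ?_⟩, gr_psiSet G H τ hτ⟩
    rintro Ψ' ⟨⟨-, hs, hprop, hr⟩, -⟩ hle
    have hGr : Gr Ψ' = Φ := by
      ext α
      constructor
      · rintro ⟨y, hy⟩; exact (hs hy).1
      · intro hα
        rw [← gr_psiSet G H τ hτ] at hα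
        obtain ⟨y, hy⟩ := hα
        exact ⟨y, hle hy⟩
    obtain ⟨H', τ', hH'G, hτ', rfl⟩ := h.struct hfin G Ψ' (hsubG Ψ' hs) hr hGr
    have hττ : ∀ (α : V) (hα : α ∈ Φ), τ ⟨α, AddSubgroup.subset_closure hα⟩ -
        τ' ⟨α, AddSubgroup.subset_closure hα⟩ ∈ H' := by
      intro α hα
      have : (α, τ ⟨α, AddSubgroup.subset_closure hα⟩) ∈ PsiSet Φ G H' τ' :=
        hle ⟨hα, hτ _, by simp⟩
      obtain ⟨_, _, h3⟩ := this
      exact h3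
    have hHH' : H ≤ H' := by
      intro k hk
      have : (α₀, τ ⟨α₀, AddSubgroup.subset_closure hα₀⟩ + k) ∈ PsiSet Φ G H' τ' :=
        hle ⟨hα₀, G.add_mem (hτ _) (hHG hk), by simpa using hk⟩
      obtain ⟨_, _, h3⟩ := this
      have := H'.sub_mem h3 (hττ α₀ hα₀)
      simpa [add_sub_right_comm] using this
    rcases hmax H' hHH' hH'G with e | e
    · subst e
      refine Set.Subset.antisymm ?_ hle
      rintro ⟨α, y⟩ ⟨hα, hy, hyH⟩
      refine ⟨hα, hy, ?_⟩
      have := H'.sub_mem hyH (hττ α hα)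
      simpa using this
    · subst e
      exact absurd (psiSet_top H' τ' hτ' Λ hG) hprop

end BdS
end
end

section
/- Let Φ̊ be a reduced irreducible root system in V, let (Λ_α) be an extension datum of type (Φ̊, Y) with common values Λ_s on short and Λ_ℓ on long roots (with Λ_ℓ = Λ_s if all roots have the same length), assume that Λ_ℓ is an additive subgroup of Y whenever dim V = 2 and two root lengths occur (the paper's mild assumption for type B₂), and let Φ^re be the associated set of real roots. Then Ψ ⊆ Φ^re is a maximal closed subroot system whose gradient Gr(Ψ) is a proper closed subroot system of Φ̊ if and only if Ψ = {α ⊕ y : α ∈ Φ̊', y ∈ Λ_α} for some maximal closed subroot system Φ̊' of Φ̊, where Φ̊' is arbitrary if Λ_ℓ = Λ_s, while if Λ_ℓ ⊊ Λ_s then additionally Φ̊' ∩ Φ̊_s ≠ ∅. -/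
open scoped RealInnerProductSpace Pointwise

noncomputable section

namespace BdS

variable {V Y : Type*} [NormedAddCommGroup V] [InnerProductSpace ℝ V]
variable [AddCommGroup Y] [Module ℝ Y]

section Helpers

variable {V Y : Type*} [NormedAddCommGroup V] [InnerProductSpace ℝ V]
variable [AddCommGroup Y] [Module ℝ Y]

lemma nn_pos {a : V} (h : a ≠ 0) : 0 < ⟪a, a⟫ := real_inner_self_pos.2 h

lemma pairing_mul {a : V} (b : V) (h : a ≠ 0) : pairing b a * ⟪a, a⟫ = 2 * ⟪b, a⟫ := by
  have := (nn_pos h).ne'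
  unfold pairing
  field_simp

lemma refl_self {a : V} (h : a ≠ 0) : reflRoot a a = -a := by
  have h1 : pairing a a = 2 := by
    have := (nn_pos h).ne'
    unfold pairing
    field_simp
  unfold reflRoot
  rw [h1, two_smul]
  abel

lemma refl_orth {a b : V} (h : ⟪b, a⟫ = 0) : reflRoot a b = b := by
  simp [reflRoot, pairing, h]

lemma refl_add (a b c : V) : reflRoot a (b + c) = reflRoot a b + reflRoot a c := by
  unfold reflRoot pairing
  rw [inner_add_left, mul_add, add_div, add_smul]
  abel

lemma refl_refl {a : V} (b : V) (h : a ≠ 0) : reflRoot a (reflRoot a b) = b := by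
  have h2 : pairing (reflRoot a b) a = - pairing b a := by
    have hp := (nn_pos h).ne'
    unfold reflRoot pairing
    rw [inner_sub_left, inner_smul_left]
    simp only [conj_trivial]
    field_simp
    ring
  conv_lhs => unfold reflRoot
  rw [show b - pairing b a • a = reflRoot a b from rfl, h2]
  unfold reflRoot
  rw [neg_smul]
  abel

lemma refl_inner {a : V} (b : V) (h : a ≠ 0) :
    ⟪reflRoot a b, reflRoot a b⟫ = ⟪b, b⟫ := by
  have hp := pairing_mul b h
  unfold reflRoot
  simp only [inner_sub_left, inner_sub_right, inner_smul_left, inner_smul_right, conj_trivial]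
  rw [real_inner_comm b a]
  linear_combination (pairing b a) * hp

section RS

variable {Φ : Set V}

lemma ne0 (hΦ : IsRootSystem Φ) {a : V} (h : a ∈ Φ) : a ≠ 0 := fun h0 => hΦ.2.1 (h0 ▸ h)

lemma rneg (hΦ : IsRootSystem Φ) {a : V} (h : a ∈ Φ) : -a ∈ Φ := by
  rw [← refl_self (ne0 hΦ h)]
  exact hΦ.2.2.2.1 a h a h

/-- positive inner product of distinct roots: one of the pairings is one -/
lemma pair_one (hΦ : IsRootSystem Φ) {a b : V} (ha : a ∈ Φ) (hb : b ∈ Φ) (hab : a ≠ b) (hp : 0 < ⟪a, b⟫) :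
    pairing a b = 1 ∨ pairing b a = 1 := by
  obtain ⟨m, hm⟩ := hΦ.2.2.2.2 b hb a ha
  obtain ⟨n, hn⟩ := hΦ.2.2.2.2 a ha b hb
  have h1 := pairing_mul a (ne0 hΦ hb)
  have h2 := pairing_mul b (ne0 hΦ ha)
  have pa := nn_pos (ne0 hΦ ha)
  have pb := nn_pos (ne0 hΦ hb)
  rw [real_inner_comm a b] at h2
  rw [hm] at h1
  rw [hn] at h2
  have cs := real_inner_mul_inner_self_le a b
  have m0 : (0:ℝ) < m := by
    by_contra hc
    nlinarith
  have n0 : (0:ℝ) < n := by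
    by_contra hc
    nlinarith
  have hmn : (m:ℝ) * n ≤ 4 := by
    have e : ((m:ℝ) * n) * (⟪a, a⟫ * ⟪b, b⟫) = 4 * (⟪a, b⟫ * ⟪a, b⟫) := by
      linear_combination (n * ⟪a, a⟫) * h1 + 2 * ⟪a, b⟫ * h2
    by_contra hc
    push Not at hc
    nlinarith [mul_pos pa pb]
  have m0' : 0 < m := by exact_mod_cast m0
  have n0' : 0 < n := by exact_mod_cast n0
  have hmn' : m * n ≤ 4 := by exact_mod_cast hmn
  rw [hm, hn]
  by_cases m1 : m = 1
  · left; simp [m1]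
  by_cases n1 : n = 1
  · right; simp [n1]
  exfalso
  have m2 : 2 ≤ m := by omega
  have n2 : 2 ≤ n := by omega
  have : m = 2 := by nlinarith
  have : n = 2 := by nlinarith
  subst m n
  push_cast at h1 h2
  apply hab
  have : ⟪a - b, a - b⟫ = 0 := by
    rw [inner_sub_left, inner_sub_right, inner_sub_right, real_inner_comm a b]
    linarith
  exact sub_eq_zero.1 (inner_self_eq_zero.1 this)

lemma sub_mem_root (hΦ : IsRootSystem Φ) {a b : V} (ha : a ∈ Φ) (hb : b ∈ Φ) (hab : a ≠ b) (hp : 0 < ⟪a, b⟫) :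
    a - b ∈ Φ := by
  rcases pair_one hΦ ha hb hab hp with h | h
  · have := hΦ.2.2.2.1 b hb a ha
    rwa [reflRoot, h, one_smul] at this
  · have := rneg hΦ (hΦ.2.2.2.1 a ha b hb)
    rwa [reflRoot, h, one_smul, neg_sub] at this

lemma nonorth (hΦ : IsRootSystem Φ) (hirr : IsIrreducible Φ) {e g : V} (he : e ∈ Φ) (hg : g ∈ Φ) :
    ∃ e' ∈ Φ, ⟪e', e'⟫ = ⟪e, e⟫ ∧ ⟪e', g⟫ ≠ 0 := by
  by_contra hc
  push Not at hc
  have hu : Φ = {x ∈ Φ | ∀ e' ∈ Φ, ⟪e', e'⟫ = ⟪e, e⟫ → ⟪e', x⟫ = 0} ∪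
      {x ∈ Φ | ¬ ∀ e' ∈ Φ, ⟪e', e'⟫ = ⟪e, e⟫ → ⟪e', x⟫ = 0} := by
    ext x
    simp only [Set.mem_union, Set.mem_ofPred_eq]
    tauto
  have ho : ∀ x ∈ {x ∈ Φ | ∀ e' ∈ Φ, ⟪e', e'⟫ = ⟪e, e⟫ → ⟪e', x⟫ = 0},
      ∀ y ∈ {x ∈ Φ | ¬ ∀ e' ∈ Φ, ⟪e', e'⟫ = ⟪e, e⟫ → ⟪e', x⟫ = 0}, ⟪x, y⟫ = 0 := by
    rintro x ⟨hx, hx'⟩ y ⟨hy, hy'⟩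
    push Not at hy'
    obtain ⟨f, hf, hfe, hfy⟩ := hy'
    have h1 := hx' f hf hfe
    have h2 := hx' _ (hΦ.2.2.2.1 y hy f hf) (by rw [refl_inner _ (ne0 hΦ hy), hfe])
    rw [reflRoot, inner_sub_left, h1, inner_smul_left, zero_sub, neg_eq_zero] at h2
    rcases mul_eq_zero.1 h2 with h3 | h3
    · exfalso
      have h4 := pairing_mul f (ne0 hΦ hy)
      simp only [conj_trivial] at h3
      rw [h3] at h4
      apply hfy
      linarith
    · rw [real_inner_comm]
      exact h3
  rcases hirr _ _ hu ho with h | h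
  · have : g ∈ (∅ : Set V) := h ▸ ⟨hg, hc⟩
    exact this
  · have : e ∈ (∅ : Set V) := h ▸ ⟨he, fun h => (nn_pos (ne0 hΦ he)).ne' (h e he rfl)⟩
    exact this

/-- possible ratios of squared lengths -/
lemma ratio (hΦ : IsRootSystem Φ) (hred : IsReduced Φ) (hirr : IsIrreducible Φ) {a b : V} (ha : a ∈ Φ) (hb : b ∈ Φ)
    (hlt : ⟪a, a⟫ < ⟪b, b⟫) : ⟪b, b⟫ = 2 * ⟪a, a⟫ ∨ ⟪b, b⟫ = 3 * ⟪a, a⟫ := by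
  obtain ⟨c0, hc0, hcb, hca0⟩ := nonorth hΦ hirr hb ha
  obtain ⟨c, hc, hcb, hca⟩ : ∃ c ∈ Φ, ⟪c, c⟫ = ⟪b, b⟫ ∧ 0 < ⟪c, a⟫ := by
    rcases lt_or_gt_of_ne hca0 with h | h
    · exact ⟨-c0, rneg hΦ hc0, by simpa using hcb, by rw [inner_neg_left]; linarith⟩
    · exact ⟨c0, hc0, hcb, h⟩
  rw [← hcb] at hlt ⊢
  obtain ⟨n, hn⟩ := hΦ.2.2.2.2 a ha c hc
  have hne : c ≠ a := by
    rintro rfl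
    exact lt_irrefl _ hlt
  have h1 := pairing_mul c (ne0 hΦ ha)
  have h2 := pairing_mul a (ne0 hΦ hc)
  rw [real_inner_comm c a] at h2
  have pa := nn_pos (ne0 hΦ ha)
  have pc := nn_pos (ne0 hΦ hc)
  have cs := real_inner_mul_inner_self_le c a
  rcases pair_one hΦ hc ha hne hca with h | h
  · exfalso
    rw [h] at h1
    obtain ⟨k, hk⟩ := hΦ.2.2.2.2 c hc a ha
    rw [hk] at h2
    have k0 : (0:ℝ) < k := by
      by_contra hcon
      nlinarith
    have k1 : (1:ℝ) ≤ k := by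
      have k0' : 0 < k := by exact_mod_cast k0
      exact_mod_cast k0'
    nlinarith
  · rw [h] at h2
    rw [hn] at h1
    have e : ⟪c, c⟫ = n * ⟪a, a⟫ := by linarith
    have n1 : (1:ℝ) < n := by
      by_contra hcon
      nlinarith
    have n4 : (n:ℝ) ≤ 4 := by
      by_contra hcon
      push Not at hcon
      nlinarith [mul_pos pa pc]
    have n1' : 1 < n := by exact_mod_cast n1
    have n4' : n ≤ 4 := by exact_mod_cast n4
    have : n = 2 ∨ n = 3 ∨ n = 4 := by omega
    rcases this with rfl | rfl | rfl
    · left; simpa using e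
    · right; simpa using e
    · exfalso
      push_cast at h1 e
      have hz : ⟪c - (2:ℝ) • a, c - (2:ℝ) • a⟫ = 0 := by
        simp only [inner_sub_left, inner_sub_right, inner_smul_left, inner_smul_right,
          conj_trivial]
        rw [real_inner_comm c a]
        linarith
      have hz' := sub_eq_zero.1 (inner_self_eq_zero.1 hz)
      have := hred a ha 2 (hz' ▸ hc)
      rw [← hz'] at this
      rcases this with h | h
      · exact hne h
      · rw [h] at hlt
        simp at hlt

lemma short_iff_s15 (hΦ : IsRootSystem Φ) (hred : IsReduced Φ) (a : V) :
    a ∈ shortSet Φ ↔ a ∈ Φ ∧ ∃ b ∈ Φ, ⟪a, a⟫ < ⟪b, b⟫ := by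
  have hd : ndSet Φ = Φ := by
    ext x
    simp only [ndSet, divSet, Set.mem_sdiff, Set.mem_ofPred_eq]
    refine ⟨fun h => h.1, fun h => ⟨h, ?_⟩⟩
    rintro ⟨_, h2⟩
    have h0 := ne0 hΦ h
    rcases hred x h _ h2 with h3 | h3
    · apply h0
      have h4 : ((2:ℝ)⁻¹ - 1) • x = 0 := by rw [sub_smul, h3, one_smul, sub_self]
      exact (smul_eq_zero.1 h4).resolve_left (by norm_num)
    · apply h0
      have h4 : ((2:ℝ)⁻¹ + 1) • x = 0 := by rw [add_smul, h3, one_smul, neg_add_cancel]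
      exact (smul_eq_zero.1 h4).resolve_left (by norm_num)
  simp [shortSet, hd]

lemma long_iff_s15 (hΦ : IsRootSystem Φ) (hred : IsReduced Φ) (a : V) :
    a ∈ longSet Φ ↔ a ∈ Φ ∧ ∀ b ∈ Φ, ⟪b, b⟫ ≤ ⟪a, a⟫ := by
  have hd : ∀ x, x ∈ Φ → x ∈ ndSet Φ := by
    intro x h
    refine ⟨h, ?_⟩
    rintro ⟨_, h2⟩
    have h0 := ne0 hΦ h
    rcases hred x h _ h2 with h3 | h3
    · apply h0
      have h4 : ((2:ℝ)⁻¹ - 1) • x = 0 := by rw [sub_smul, h3, one_smul, sub_self]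
      exact (smul_eq_zero.1 h4).resolve_left (by norm_num)
    · apply h0
      have h4 : ((2:ℝ)⁻¹ + 1) • x = 0 := by rw [add_smul, h3, one_smul, neg_add_cancel]
      exact (smul_eq_zero.1 h4).resolve_left (by norm_num)
  rw [longSet, Set.mem_sdiff, short_iff_s15 hΦ hred]
  constructor
  · rintro ⟨h1, h2⟩
    refine ⟨h1.1, fun b hb => ?_⟩
    by_contra hc
    exact h2 ⟨h1.1, b, hb, not_le.1 hc⟩
  · rintro ⟨h1, h2⟩
    refine ⟨hd a h1, ?_⟩
    rintro ⟨_, b, hb, hlt⟩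
    exact absurd (h2 b hb) (not_le.2 hlt)

lemma short_same (hΦ : IsRootSystem Φ) (hred : IsReduced Φ) (hirr : IsIrreducible Φ) {a b : V}
    (ha : a ∈ Φ) (hb : b ∈ shortSet Φ) (hlt : ⟪a, a⟫ < ⟪b, b⟫) : False := by
  obtain ⟨hb, c, hc, hbc⟩ := (short_iff_s15 hΦ hred b).1 hb
  have pa := nn_pos (ne0 hΦ ha)
  rcases ratio hΦ hred hirr ha hb hlt with h1 | h1 <;>
  rcases ratio hΦ hred hirr hb hc hbc with h2 | h2 <;>
  rcases ratio hΦ hred hirr ha hc (hlt.trans hbc) with h3 | h3 <;> linarith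

lemma short_or_long (hΦ : IsRootSystem Φ) (hred : IsReduced Φ) {a : V} (ha : a ∈ Φ) :
    a ∈ shortSet Φ ∨ a ∈ longSet Φ := by
  by_cases h : a ∈ shortSet Φ
  · exact Or.inl h
  · right
    rw [short_iff_s15 hΦ hred] at h
    rw [long_iff_s15 hΦ hred]
    refine ⟨ha, fun b hb => ?_⟩
    by_contra hc
    exact h ⟨ha, b, hb, not_le.1 hc⟩

lemma long_add (hΦ : IsRootSystem Φ) (hred : IsReduced Φ) {a b : V} (ha : a ∈ longSet Φ) (hb : b ∈ longSet Φ)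
    (hab : a + b ∈ Φ) : a + b ∈ longSet Φ := by
  rw [long_iff_s15 hΦ hred] at *
  refine ⟨hab, fun c hc => (ha.2 c hc).trans ?_⟩
  have e1 := ha.2 b hb.1
  have e2 := hb.2 a ha.1
  have e3 := ha.2 _ hab
  have e : ⟪a + b, a + b⟫ = ⟪a, a⟫ + ⟪b, b⟫ + 2 * ⟪a, b⟫ := by
    rw [inner_add_left, inner_add_right, inner_add_right, real_inner_comm a b]
    ring
  have pa := nn_pos (ne0 hΦ ha.1)
  have hneg : 0 < ⟪a, -b⟫ := by
    rw [inner_neg_right]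
    linarith
  have hne : a ≠ -b := by
    rintro h
    apply ne0 hΦ hab
    rw [h]
    simp
  rcases pair_one hΦ ha.1 (rneg hΦ hb.1) hne hneg with h | h
  · have := refl_inner a (ne0 hΦ (rneg hΦ hb.1))
    rw [reflRoot, h, one_smul, sub_neg_eq_add] at this
    exact this.ge
  · have := refl_inner (-b) (ne0 hΦ ha.1)
    rw [reflRoot, h, one_smul, ← neg_add', inner_neg_neg, inner_neg_neg, add_comm] at this
    rw [this]
    exact e2

/-- the roots strongly orthogonal to T -/
def strongOrth (Φ T : Set V) : Set V := {x ∈ Φ | ∀ t ∈ T, ⟪x, t⟫ = 0 ∧ x + t ∉ Φ}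

lemma split_closed (hΦ : IsRootSystem Φ) {T : Set V} (hT : IsClosedSubRS Φ T) :
    IsClosedSubRS Φ (T ∪ strongOrth Φ T) := by
  obtain ⟨⟨hne, hsub, hrefl⟩, hcl⟩ := hT
  refine ⟨⟨hne.mono Set.subset_union_left, ?_, ?_⟩, ?_⟩
  · rintro x (hx | hx)
    · exact hsub hx
    · exact hx.1
  · rintro a (ha | ha) b (hb | hb)
    · exact Or.inl (hrefl a ha b hb)
    · rw [refl_orth (hb.2 a ha).1]
      exact Or.inr hb
    · rw [refl_orth (by rw [real_inner_comm]; exact (ha.2 b hb).1)]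
      exact Or.inl hb
    · right
      refine ⟨hΦ.2.2.2.1 a ha.1 b hb.1, fun t ht => ⟨?_, fun h => ?_⟩⟩
      · rw [reflRoot, inner_sub_left, inner_smul_left, (hb.2 t ht).1, (ha.2 t ht).1]
        simp
      · have h2 := hΦ.2.2.2.1 a ha.1 _ h
        rw [refl_add, refl_refl _ (ne0 hΦ ha.1),
          refl_orth (by rw [real_inner_comm]; exact (ha.2 t ht).1)] at h2
        exact (hb.2 t ht).2 h2
  · rintro a (ha | ha) b (hb | hb) hab
    · exact Or.inl (hcl a ha b hb hab)
    · rw [add_comm] at hab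
      exact absurd hab (hb.2 a ha).2
    · exact absurd hab (ha.2 b hb).2
    · right
      refine ⟨hab, fun t ht => ⟨?_, fun h => ?_⟩⟩
      · rw [inner_add_left, (hb.2 t ht).1, (ha.2 t ht).1, add_zero]
      · have aux : ∀ x ∈ strongOrth Φ T, ∀ y ∈ strongOrth Φ T, x + y + t ∈ Φ →
            ¬ 0 < ⟪x + y + t, x⟫ := by
          intro x hx y hy hxy hpos
          have hne' : x + y + t ≠ x := by
            intro he
            have h0 : y + t = 0 := by
              have : x + (y + t) = x + 0 := by rw [← add_assoc, he, add_zero]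
              exact add_left_cancel this
            have h1 : ⟪y + t, t⟫ = 0 := by rw [h0, inner_zero_left]
            rw [inner_add_left, (hy.2 t ht).1, zero_add] at h1
            exact (nn_pos (ne0 hΦ (hsub ht))).ne' h1
          have h2 := sub_mem_root hΦ hxy hx.1 hne' hpos
          rw [show x + y + t - x = y + t by abel] at h2
          exact (hy.2 t ht).2 h2
        have h1 := aux a ha b hb h
        have h2 := aux b hb a ha (by rwa [add_comm b a])
        have h3 := nn_pos (ne0 hΦ hab)
        have h4 : ⟪a + b, a + b⟫ = ⟪a + b + t, a⟫ + ⟪b + a + t, b⟫ := by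
          have e1 : ⟪t, a⟫ = 0 := by rw [real_inner_comm]; exact (ha.2 t ht).1
          have e2 : ⟪t, b⟫ = 0 := by rw [real_inner_comm]; exact (hb.2 t ht).1
          simp only [inner_add_left, inner_add_right, e1, e2]
          ring
        linarith

lemma split_proper (hirr : IsIrreducible Φ) {T : Set V} (hT : T.Nonempty)
    (h : T ∪ strongOrth Φ T = Φ) : strongOrth Φ T = ∅ := by
  have ho : ∀ x ∈ T, ∀ y ∈ strongOrth Φ T, ⟪x, y⟫ = 0 := by
    intro x hx y hy
    rw [real_inner_comm]
    exact (hy.2 x hx).1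
  exact (hirr T (strongOrth Φ T) h.symm ho).resolve_left hT.ne_empty

lemma csneg (hΦ : IsRootSystem Φ) {Δ : Set V} (hΔ : IsClosedSubRS Φ Δ) {a : V} (h : a ∈ Δ) : -a ∈ Δ := by
  rw [← refl_self (ne0 hΦ (hΔ.1.2.1 h))]
  exact hΔ.1.2.2 a h a h

end RS

/-- the full lift of a set of roots -/
def lift (Λ : V → Set Y) (Δ : Set V) : Set (V × Y) := {x | x.1 ∈ Δ ∧ x.2 ∈ Λ x.1}

section ED
variable {Φ : Set V} {Λ : V → Set Y}

lemma Gr_lift (h0 : ∀ α ∈ Φ, (0 : Y) ∈ Λ α)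
    {Δ : Set V} (hsub : Δ ⊆ Φ) : Gr (lift Λ Δ) = Δ := by
  ext a
  constructor
  · rintro ⟨y, hy⟩
    exact hy.1
  · intro ha
    exact ⟨0, ha, h0 a (hsub ha)⟩

lemma lift_closed (hE : ∀ α ∈ Φ, ∀ β ∈ Φ, ∀ z ∈ Λ α, ∀ y ∈ Λ β,
      y - pairing β α • z ∈ Λ (reflRoot α β))
    (h0 : ∀ α ∈ Φ, (0 : Y) ∈ Λ α)
    {Δ : Set V} (hΔ : IsClosedSubRS Φ Δ) (hne : Δ ≠ Φ) :
    IsClosedSubSys (PhiRe Φ Λ) (lift Λ Δ) := by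
  obtain ⟨⟨⟨d, hd⟩, hsub, hrefl⟩, hcl⟩ := hΔ
  refine ⟨⟨⟨(d, 0), hd, h0 d (hsub hd)⟩, ?_, ?_, ?_⟩, ?_⟩
  · rintro x ⟨h1, h2⟩
    exact ⟨hsub h1, h2⟩
  · intro h
    apply hne
    apply hsub.antisymm
    intro x hx
    have : ((x, 0) : V × Y) ∈ PhiRe Φ Λ := ⟨hx, h0 x hx⟩
    rw [← h] at this
    exact this.1
  · rintro a ⟨ha1, ha2⟩ x ⟨hx1, hx2⟩
    exact ⟨hrefl _ ha1 _ hx1, hE _ (hsub ha1) _ (hsub hx1) _ ha2 _ hx2⟩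
  · rintro x ⟨hx1, hx2⟩ y ⟨hy1, hy2⟩ hxy
    exact ⟨hcl _ hx1 _ hy1 hxy.1, hxy.2⟩

lemma lam_neg (hΦ : IsRootSystem Φ)
    (hE : ∀ α ∈ Φ, ∀ β ∈ Φ, ∀ z ∈ Λ α, ∀ y ∈ Λ β,
      y - pairing β α • z ∈ Λ (reflRoot α β))
    {a : V} (ha : a ∈ Φ) {y : Y} (hy : y ∈ Λ a) : -y ∈ Λ (-a) := by
  have h := hE a ha a ha y hy y hy
  have h1 : pairing a a = 2 := by
    have := (nn_pos (ne0 hΦ ha)).ne'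
    unfold pairing
    field_simp
  rw [refl_self (ne0 hΦ ha), h1, two_smul] at h
  simpa using h

/-- differences: if `0 < ⟪c, a⟫` then `Λ c - Λ a ⊆ Λ (c - a)` -/
lemma lam_sub (hΦ : IsRootSystem Φ)
    (hE : ∀ α ∈ Φ, ∀ β ∈ Φ, ∀ z ∈ Λ α, ∀ y ∈ Λ β,
      y - pairing β α • z ∈ Λ (reflRoot α β))
    {a c : V} (ha : a ∈ Φ) (hc : c ∈ Φ) (hne : c ≠ a) (hpos : 0 < ⟪c, a⟫)
    {w y : Y} (hw : w ∈ Λ c) (hy : y ∈ Λ a) : w - y ∈ Λ (c - a) := by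
  rcases pair_one hΦ hc ha hne hpos with h | h
  · have := hE a ha c hc y hy w hw
    rwa [reflRoot, h, one_smul, one_smul] at this
  · have h2 := hE c hc a ha w hw y hy
    have h3 := hΦ.2.2.2.1 c hc a ha
    rw [reflRoot, h, one_smul] at h3
    rw [reflRoot, h, one_smul, one_smul] at h2
    have := lam_neg hΦ hE h3 h2
    rwa [neg_sub, neg_sub] at this

end ED

end Helpers

/-- Theorem 6.1: maximal closed subroot systems with proper closed gradient. -/
theorem statement15 {V Y : Type*} [NormedAddCommGroup V] [InnerProductSpace ℝ V]
    [FiniteDimensional ℝ V] [AddCommGroup Y] [Module ℝ Y] [FiniteDimensional ℝ Y]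
    (Φ : Set V) (hΦ : IsRootSystem Φ) (hred : IsReduced Φ) (hirr : IsIrreducible Φ)
    (Λ : V → Set Y) (Λs Λl : Set Y) (hED : IsExtensionDatum Φ Λ)
    (hs : ∀ α ∈ shortSet Φ, Λ α = Λs) (hl : ∀ α ∈ longSet Φ, Λ α = Λl)
    (hls : Λl ⊆ Λs)
    (hone : shortSet Φ = ∅ → Λl = Λs)
    (hmild : Module.finrank ℝ V = 2 ∧ (shortSet Φ).Nonempty →
      ∃ G : AddSubgroup Y, Λl = (G : Set Y))
    (Ψ : Set (V × Y)) :
    (IsMaxClosedSubSys (PhiRe Φ Λ) Ψ ∧ IsClosedSubRS Φ (Gr Ψ) ∧ Gr Ψ ≠ Φ) ↔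
      ∃ Δ : Set V, IsMaxClosedSubRS Φ Δ ∧
        (Λl ≠ Λs → (Δ ∩ shortSet Φ).Nonempty) ∧
        Ψ = {x | x.1 ∈ Δ ∧ x.2 ∈ Λ x.1} := by
  obtain ⟨hE, -, h0', -, -⟩ := hED
  have h0 : ∀ α ∈ Φ, (0 : Y) ∈ Λ α := by
    intro α hα
    rcases short_or_long hΦ hred hα with h | h
    · exact h0' α h.1
    · exact h0' α h.1
  constructor
  · rintro ⟨⟨hcl, hmax⟩, hGr, hGrne⟩
    have hΨ : lift Λ (Gr Ψ) = Ψ := by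
      apply hmax _ (lift_closed hE h0 hGr hGrne)
      intro x hx
      exact ⟨⟨x.2, hx⟩, (hcl.1.2.1 hx).2⟩
    have hGmax : IsMaxClosedSubRS Φ (Gr Ψ) := by
      refine ⟨hGr, hGrne, fun Δ' hΔ' hne hsub => ?_⟩
      have := hmax _ (lift_closed hE h0 hΔ' hne) (by
        rw [← hΨ]
        rintro x ⟨h1, h2⟩
        exact ⟨hsub h1, h2⟩)
      rw [← this, Gr_lift h0 hΔ'.1.2.1]
    refine ⟨Gr Ψ, hGmax, fun hne => ?_, hΨ.symm⟩
    by_contra hno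
    have hGl : Gr Ψ ⊆ longSet Φ := by
      intro x hx
      rcases short_or_long hΦ hred (hGr.1.2.1 hx) with h | h
      · exact absurd ⟨x, hx, h⟩ hno
      · exact h
    obtain ⟨g, hg⟩ : (shortSet Φ).Nonempty := by
      by_contra hc
      exact hne (hone (Set.not_nonempty_iff_eq_empty.1 hc))
    have hgΦ := ((short_iff_s15 hΦ hred g).1 hg).1
    have hgl : g ∉ longSet Φ := fun h => h.2 hg
    have hLsub : longSet Φ ⊆ Φ := fun x hx => ((long_iff_s15 hΦ hred x).1 hx).1
    have hLne : longSet Φ ≠ Φ := fun h => hgl (h.symm.subset hgΦ)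
    have hLcl : IsClosedSubRS Φ (longSet Φ) := by
      refine ⟨⟨hGr.1.1.mono hGl, hLsub, ?_⟩, fun a ha b hb hab => long_add hΦ hred ha hb hab⟩
      intro a ha b hb
      rw [long_iff_s15 hΦ hred] at hb ⊢
      refine ⟨hΦ.2.2.2.1 a (hLsub ha) b hb.1, ?_⟩
      rw [refl_inner _ (ne0 hΦ (hLsub ha))]
      exact hb.2
    have hGL : longSet Φ = Gr Ψ := hGmax.2.2 _ hLcl hLne hGl
    obtain ⟨l0, hl0⟩ := hLcl.1.1
    have hzl : (0 : Y) ∈ Λl := hl l0 hl0 ▸ h0 l0 (hLsub hl0)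
    have hdiff : ∀ w ∈ Λl, ∀ y ∈ Λl, w - y ∈ Λl := by
      by_cases hdim : Module.finrank ℝ V = 2
      · obtain ⟨G, hG⟩ := hmild ⟨hdim, g, hg⟩
        rw [hG]
        intro w hw y hy
        exact G.sub_mem hw hy
      by_cases hpos : ∃ a ∈ longSet Φ, ∃ b ∈ longSet Φ, a ≠ b ∧ 0 < ⟪a, b⟫
      · obtain ⟨a, ha, b, hb, hab, hp⟩ := hpos
        intro w hw y hy
        have haΦ := hLsub ha
        have hbΦ := hLsub hb
        have hm : a - b ∈ longSet Φ := by
          rw [sub_eq_add_neg]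
          apply long_add hΦ hred ha (csneg hΦ hLcl hb)
          rw [← sub_eq_add_neg]
          exact sub_mem_root hΦ haΦ hbΦ hab hp
        rw [← hl _ hm]
        exact lam_sub hΦ hE hbΦ haΦ hab hp (by rwa [hl a ha]) (by rwa [hl b hb])
      exfalso
      push Not at hpos
      have horth : ∀ a ∈ longSet Φ, ∀ b ∈ longSet Φ, a ≠ b → a ≠ -b → ⟪a, b⟫ = 0 := by
        intro a ha b hb h1 h2
        have e1 := hpos a ha b hb h1
        have e2 := hpos a ha (-b) (csneg hΦ hLcl hb) h2
        rw [inner_neg_right] at e2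
        linarith
      obtain ⟨e, he, hee, heg⟩ := nonorth hΦ hirr (hLsub hl0) hgΦ
      have heL : e ∈ longSet Φ := by
        rw [long_iff_s15 hΦ hred] at hl0 ⊢
        exact ⟨he, by rw [hee]; exact hl0.2⟩
      have hg0 := ne0 hΦ hgΦ
      have hc : pairing e g ≠ 0 := by
        intro h
        have := pairing_mul e hg0
        rw [h] at this
        apply heg
        linarith
      obtain ⟨f, hf⟩ : ∃ f, f = reflRoot g e := ⟨_, rfl⟩
      have hfL : f ∈ longSet Φ := by
        rw [long_iff_s15 hΦ hred] at heL ⊢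
        rw [hf, refl_inner _ hg0]
        exact ⟨hΦ.2.2.2.1 g hgΦ e he, heL.2⟩
      have hgspan : ∀ U : Submodule ℝ V, e ∈ U → f ∈ U → g ∈ U := by
        intro U h1 h2
        have h3 : g = (pairing e g)⁻¹ • (e - f) := by
          rw [hf, reflRoot, sub_sub_cancel, smul_smul, inv_mul_cancel₀ hc, one_smul]
        rw [h3]
        exact U.smul_mem _ (U.sub_mem h1 h2)
      have hnp : g ∉ Submodule.span ℝ {e} := by
        intro h
        obtain ⟨k, hk⟩ := Submodule.mem_span_singleton.1 h
        rcases hred e he k (hk ▸ hgΦ) with h1 | h1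
        · apply hgl
          rw [← hk, h1]
          exact heL
        · apply hgl
          rw [← hk, h1]
          exact csneg hΦ hLcl heL
      have hef : e ≠ f := by
        intro h
        apply hc
        have h3 : pairing e g • g = 0 := by
          rw [hf, reflRoot] at h
          have := sub_eq_self.1 h.symm
          exact this
        exact (smul_eq_zero.1 h3).resolve_right hg0
      have hse : e ∈ Submodule.span ℝ {e} := Submodule.mem_span_singleton_self e
      have hef' : e ≠ -f := by
        intro h
        apply hnp
        apply hgspan _ hse
        have : f = -e := by rw [h, neg_neg]
        rw [this]
        exact Submodule.neg_mem _ hse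
      have hort := horth e heL f hfL hef hef'
      obtain ⟨U, hU⟩ : ∃ U : Submodule ℝ V, U = Submodule.span ℝ {e, f} := ⟨_, rfl⟩
      have heU : e ∈ U := hU ▸ Submodule.subset_span (by simp)
      have hfU : f ∈ U := hU ▸ Submodule.subset_span (by simp)
      have hTcl : IsClosedSubRS Φ (Φ ∩ U) := by
        refine ⟨⟨⟨e, he, heU⟩, Set.inter_subset_left, ?_⟩, ?_⟩
        · rintro a ⟨ha1, ha2⟩ b ⟨hb1, hb2⟩
          exact ⟨hΦ.2.2.2.1 a ha1 b hb1, U.sub_mem hb2 (U.smul_mem _ ha2)⟩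
        · rintro a ⟨ha1, ha2⟩ b ⟨hb1, hb2⟩ hab
          exact ⟨hab, U.add_mem ha2 hb2⟩
      have hDcl := split_closed hΦ hTcl
      have hDne : (Φ ∩ U) ∪ strongOrth Φ (Φ ∩ U) ≠ Φ := by
        intro h
        have h2 := split_proper hirr hTcl.1.1 h
        rw [h2, Set.union_empty] at h
        have hUtop : U = ⊤ := by
          rw [eq_top_iff, ← hΦ.2.2.1, Submodule.span_le]
          intro x hx
          rw [← h] at hx
          exact hx.2
        apply hdim
        have hli : LinearIndependent ℝ ![e, f] := by
          rw [LinearIndependent.pair_iff]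
          intro s t hst
          have e1 : ⟪s • e + t • f, e⟫ = 0 := by rw [hst, inner_zero_left]
          have e2 : ⟪s • e + t • f, f⟫ = 0 := by rw [hst, inner_zero_left]
          simp only [inner_add_left, inner_smul_left, conj_trivial, hort] at e1 e2
          rw [real_inner_comm e f, hort] at e1
          have p1 := (nn_pos (ne0 hΦ he)).ne'
          have p2 := (nn_pos (ne0 hΦ (hLsub hfL))).ne'
          constructor
          · simpa [ne0 hΦ he] using e1
          · simpa [ne0 hΦ (hLsub hfL)] using e2
        have hfr := finrank_span_eq_card hli
        rw [Matrix.range_cons, Matrix.range_cons, Matrix.range_empty, Set.union_empty,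
          Set.singleton_union, ← hU, hUtop, finrank_top] at hfr
        simpa using hfr
      have hGD : Gr Ψ ⊆ (Φ ∩ U) ∪ strongOrth Φ (Φ ∩ U) := by
        intro x hx
        have hxL := hGl hx
        have hxΦ := hLsub hxL
        by_cases hxe : x = e ∨ x = -e
        · left
          refine ⟨hxΦ, ?_⟩
          rcases hxe with h | h
          · rw [h]; exact heU
          · rw [h]; exact U.neg_mem heU
        by_cases hxf : x = f ∨ x = -f
        · left
          refine ⟨hxΦ, ?_⟩
          rcases hxf with h | h
          · rw [h]; exact hfU
          · rw [h]; exact U.neg_mem hfU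
        push Not at hxe hxf
        right
        have o1 := horth x hxL e heL hxe.1 hxe.2
        have o2 := horth x hxL f hfL hxf.1 hxf.2
        refine ⟨hxΦ, ?_⟩
        rintro t ⟨ht, htU⟩
        have o3 : ⟪x, t⟫ = 0 := by
          have htU' : t ∈ Submodule.span ℝ {e, f} := hU ▸ htU
          obtain ⟨p, q, rfl⟩ := Submodule.mem_span_pair.1 htU'
          rw [inner_add_right, inner_smul_right, inner_smul_right, o1, o2]
          simp
        refine ⟨o3, fun hxt => ?_⟩
        have h1 := ((long_iff_s15 hΦ hred x).1 hxL).2 _ hxt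
        have h2 := nn_pos (ne0 hΦ ht)
        rw [inner_add_left, inner_add_right, inner_add_right, real_inner_comm x t, o3] at h1
        linarith
      have hfin := hGmax.2.2 _ hDcl hDne hGD
      apply hgl
      apply hGl
      rw [← hfin]
      exact Or.inl ⟨hgΦ, hgspan U heU hfU⟩
    have hneg : ∀ y ∈ Λl, -y ∈ Λl := fun y hy => by simpa using hdiff 0 hzl y hy
    have hadd : ∀ w ∈ Λl, ∀ y ∈ Λl, w + y ∈ Λl := fun w hw y hy => by
      simpa using hdiff w hw _ (hneg y hy)
    let G : AddSubgroup Y :=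
      { carrier := Λl
        zero_mem' := hzl
        add_mem' := fun {a b} ha hb => hadd a ha b hb
        neg_mem' := fun {a} ha => hneg a ha }
    have hGmem : ∀ y, y ∈ G ↔ y ∈ Λl := fun y => Iff.rfl
    have hΛ : ∀ α ∈ Φ, Λl ⊆ Λ α := by
      intro α hα
      rcases short_or_long hΦ hred hα with h | h
      · rw [hs α h]; exact hls
      · rw [hl α h]
    have hbig : IsClosedSubSys (PhiRe Φ Λ) {x : V × Y | x.1 ∈ Φ ∧ x.2 ∈ G} := by
      refine ⟨⟨⟨(g, 0), hgΦ, G.zero_mem⟩, ?_, ?_, ?_⟩, ?_⟩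
      · rintro x ⟨h1, h2⟩
        exact ⟨h1, hΛ _ h1 h2⟩
      · intro h
        apply hne
        apply hls.antisymm
        intro y hy
        have : ((g, y) : V × Y) ∈ PhiRe Φ Λ := ⟨hgΦ, by rw [hs g hg]; exact hy⟩
        rw [← h] at this
        exact this.2
      · rintro a ⟨ha1, ha2⟩ x ⟨hx1, hx2⟩
        refine ⟨hΦ.2.2.2.1 _ ha1 _ hx1, ?_⟩
        obtain ⟨m, hm⟩ := hΦ.2.2.2.2 _ ha1 _ hx1
        change x.2 - pairing x.1 a.1 • a.2 ∈ G
        rw [hm, Int.cast_smul_eq_zsmul]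
        exact G.sub_mem hx2 (G.zsmul_mem ha2 m)
      · rintro x ⟨hx1, hx2⟩ y ⟨hy1, hy2⟩ hxy
        exact ⟨hxy.1, G.add_mem hx2 hy2⟩
    have hfin := hmax _ hbig (by
      intro x hx
      have hx1 : x.1 ∈ Gr Ψ := ⟨x.2, hx⟩
      have h1 := hcl.1.2.1 hx
      refine ⟨h1.1, ?_⟩
      rw [hGmem, ← hl _ (hGl hx1)]
      exact h1.2)
    apply hgl
    apply hGl
    refine ⟨0, ?_⟩
    rw [← hfin]
    exact ⟨hgΦ, G.zero_mem⟩
  · rintro ⟨Δ, ⟨hΔ, hΔne, hΔmax⟩, hΔs, hΨ⟩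
    have hΨ' : Ψ = lift Λ Δ := hΨ
    subst hΨ'
    have hΔsub := hΔ.1.2.1
    have hGr := Gr_lift h0 hΔsub
    refine ⟨⟨lift_closed hE h0 hΔ hΔne, ?_⟩, by rw [hGr]; exact hΔ, by rw [hGr]; exact hΔne⟩
    intro Ψ' hcl' hsub
    obtain ⟨⟨-, hR, hRne, hrefl⟩, hadd⟩ := hcl'
    have hfullcl : IsClosedSubRS Φ {x ∈ Φ | ∀ w ∈ Λ x, (x, w) ∈ Ψ'} := by
      obtain ⟨d, hd⟩ := hΔ.1.1
      refine ⟨⟨⟨d, hΔsub hd, fun w hw => hsub ⟨hd, hw⟩⟩, fun x hx => hx.1, ?_⟩, ?_⟩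
      · rintro a ⟨ha1, ha2⟩ b ⟨hb1, hb2⟩
        have hab := hΦ.2.2.2.1 a ha1 b hb1
        refine ⟨hab, fun w hw => ?_⟩
        have h1 := hE a ha1 _ hab 0 (h0 a ha1) w hw
        rw [refl_refl _ (ne0 hΦ ha1), smul_zero, sub_zero] at h1
        have h2 := hrefl _ (ha2 0 (h0 a ha1)) _ (hb2 w h1)
        simpa [reflAff] using h2
      · rintro a ⟨ha1, ha2⟩ b ⟨hb1, hb2⟩ hab
        refine ⟨hab, fun w hw => ?_⟩
        have hor : w ∈ Λ a ∨ w ∈ Λ b := by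
          have key : w ∈ Λl ∨ ((a ∈ shortSet Φ ∨ b ∈ shortSet Φ) ∧ w ∈ Λs) := by
            rcases short_or_long hΦ hred hab with h | h
            · right
              rw [hs _ h] at hw
              refine ⟨?_, hw⟩
              rcases short_or_long hΦ hred ha1 with h1 | h1
              · exact Or.inl h1
              rcases short_or_long hΦ hred hb1 with h2 | h2
              · exact Or.inr h2
              exact absurd h (long_add hΦ hred h1 h2 hab).2
            · left
              rwa [hl _ h] at hw
          rcases key with h | ⟨h | h, hw'⟩
          · left
            rcases short_or_long hΦ hred ha1 with h1 | h1
            · rw [hs _ h1]; exact hls h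
            · rwa [hl _ h1]
          · left; rwa [hs _ h]
          · right; rwa [hs _ h]
        rcases hor with h | h
        · have := hadd _ (ha2 w h) _ (hb2 0 (h0 b hb1)) (by
            rw [Prod.mk_add_mk, add_zero]; exact ⟨hab, hw⟩)
          rwa [Prod.mk_add_mk, add_zero] at this
        · have := hadd _ (ha2 0 (h0 a ha1)) _ (hb2 w h) (by
            rw [Prod.mk_add_mk, zero_add]; exact ⟨hab, hw⟩)
          rwa [Prod.mk_add_mk, zero_add] at this
    have hfull := hΔmax _ hfullcl (by
      intro h
      apply hRne
      apply hR.antisymm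
      rintro ⟨x, w⟩ ⟨hx, hw⟩
      have hx' : x ∈ Φ := hx
      rw [← h] at hx'
      exact hx'.2 w hw) (fun x hx => ⟨hΔsub hx, fun w hw => hsub ⟨hx, hw⟩⟩)
    by_contra hneq
    have hS : ∃ α y, (α, y) ∈ Ψ' ∧ α ∉ Δ := by
      by_contra hc
      push Not at hc
      apply hneq
      apply Set.Subset.antisymm _ hsub
      rintro ⟨α, y⟩ h
      exact ⟨hc α y h, (hR h).2⟩
    have key : ∀ α y, (α, y) ∈ Ψ' → α ∉ Δ → ∀ β ∈ Δ, α + β ∈ Φ →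
        ⟪α + β, α⟫ ≤ 0 ∧ Λl ≠ Λs := by
      intro α y hαy hα β hβ hαβ
      have hαΦ : α ∈ Φ := (hR hαy).1
      have hyΛ : y ∈ Λ α := (hR hαy).2
      have hβΦ := hΔsub hβ
      by_contra hc
      have hw : ∀ w ∈ Λ (α + β), w - y ∈ Λ β := by
        intro w hw
        have hne : α + β ≠ α := by
          intro h
          exact ne0 hΦ hβΦ (by simpa using h)
        by_cases hp : 0 < ⟪α + β, α⟫
        · have := lam_sub hΦ hE hαΦ hαβ hne hp hw hyΛ
          rwa [add_sub_cancel_left] at this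
        · have heq : Λl = Λs := by
            by_contra h
            exact hc ⟨not_lt.1 hp, h⟩
          have hM : ∀ x ∈ Φ, Λ x = Λs := by
            intro x hx
            rcases short_or_long hΦ hred hx with h | h
            · exact hs x h
            · rw [hl x h, heq]
          have pα := nn_pos (ne0 hΦ hαΦ)
          rw [inner_add_left] at hp
          have hpos : 0 < ⟪-α, β⟫ := by
            rw [inner_neg_left, real_inner_comm]
            linarith
          have hne2 : -α ≠ β := by
            intro h
            apply ne0 hΦ hαβ
            rw [← h]
            simp
          have hnα := rneg hΦ hαΦ
          have hsubm := sub_mem_root hΦ hnα hβΦ hne2 hpos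
          rw [hM _ hβΦ]
          rw [hM _ hαβ] at hw
          rw [hM _ hαΦ] at hyΛ
          have := lam_sub hΦ hE hβΦ hnα hne2 hpos (w := w) (y := y)
            (by rwa [hM _ hnα]) (by rwa [hM _ hβΦ])
          rwa [hM _ hsubm] at this
      have hmem : α + β ∈ {x ∈ Φ | ∀ w ∈ Λ x, (x, w) ∈ Ψ'} := by
        refine ⟨hαβ, fun w hw' => ?_⟩
        have h1 : ((β, w - y) : V × Y) ∈ Ψ' := hsub ⟨hβ, hw w hw'⟩
        have h2 : ((α, y) : V × Y) + (β, w - y) = (α + β, w) := by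
          rw [Prod.mk_add_mk, add_sub_cancel]
        have := hadd _ hαy _ h1 (by rw [h2]; exact ⟨hαβ, hw'⟩)
        rwa [h2] at this
      rw [hfull] at hmem
      apply hα
      have := hΔ.2 _ hmem _ (csneg hΦ hΔ hβ) (by rwa [add_neg_cancel_right])
      rwa [add_neg_cancel_right] at this
    obtain ⟨S, hSdef⟩ : ∃ S : Set V, S = {α | (∃ y, (α, y) ∈ Ψ') ∧ α ∉ Δ} := ⟨_, rfl⟩
    have hSmem : ∀ α, α ∈ S ↔ (∃ y, (α, y) ∈ Ψ') ∧ α ∉ Δ := by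
      intro α; rw [hSdef]; rfl
    have hSΦ : ∀ α ∈ S, α ∈ Φ := by
      intro α hα
      obtain ⟨⟨y, hy⟩, -⟩ := (hSmem α).1 hα
      exact (hR hy).1
    have keyS : ∀ α ∈ S, ∀ β ∈ Δ, α + β ∈ Φ → ⟪α + β, α⟫ ≤ 0 ∧ Λl ≠ Λs := by
      intro α hα
      obtain ⟨⟨y, hy⟩, h⟩ := (hSmem α).1 hα
      exact key α y hy h
    have hSrefl : ∀ α ∈ S, ∀ β ∈ Δ, reflRoot β α ∈ S := by
      intro α hα β hβ
      obtain ⟨⟨y, hy⟩, h⟩ := (hSmem α).1 hα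
      have h1 : ((β, 0) : V × Y) ∈ Ψ' := hsub ⟨hβ, h0 β (hΔsub hβ)⟩
      refine (hSmem _).2 ⟨⟨_, hrefl _ h1 _ hy⟩, fun h2 => h ?_⟩
      have := hΔ.1.2.2 β hβ _ h2
      rwa [refl_refl _ (ne0 hΦ (hΔsub hβ))] at this
    have hTex : ∃ t ∈ Δ, ∀ α ∈ S, ⟪t, α⟫ = 0 := by
      obtain ⟨t, ht, hts⟩ : ∃ t ∈ Δ, Λl ≠ Λs → t ∈ shortSet Φ := by
        by_cases h : Λl = Λs
        · obtain ⟨d, hd⟩ := hΔ.1.1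
          exact ⟨d, hd, fun h' => absurd h h'⟩
        · obtain ⟨d, hd, hd'⟩ := hΔs h
          exact ⟨d, hd, fun _ => hd'⟩
      refine ⟨t, ht, fun α hα => ?_⟩
      have hαΦ := hSΦ α hα
      have hαΔ := ((hSmem α).1 hα).2
      have htΦ := hΔsub ht
      have aux : ∀ u ∈ Δ, ⟪u, u⟫ = ⟪t, t⟫ → ¬ ⟪α, u⟫ < 0 := by
        intro u hu hut hneg
        have hs1 : α + u ∈ Φ := by
          have := sub_mem_root hΦ hαΦ (rneg hΦ (hΔsub hu))
            (fun h => hαΔ (h ▸ csneg hΦ hΔ hu)) (by rw [inner_neg_right]; linarith)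
          rwa [sub_neg_eq_add] at this
        obtain ⟨h1, h2⟩ := keyS α hα u hu hs1
        apply short_same hΦ hred hirr hαΦ (hts h2)
        rw [← hut]
        have p1 := nn_pos (ne0 hΦ hs1)
        rw [inner_add_left, inner_add_right, inner_add_right] at p1
        rw [inner_add_left] at h1
        have p2 := nn_pos (ne0 hΦ hαΦ)
        have := real_inner_comm α u
        linarith
      have h1 := aux t ht rfl
      have h2 := aux (-t) (csneg hΦ hΔ ht) (by rw [inner_neg_neg])
      rw [inner_neg_right] at h2
      rw [real_inner_comm]
      linarith
    obtain ⟨T, hTdef⟩ : ∃ T : Set V, T = {t | t ∈ Δ ∧ ∀ α ∈ S, ⟪t, α⟫ = 0} := ⟨_, rfl⟩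
    have hTmem : ∀ t, t ∈ T ↔ t ∈ Δ ∧ ∀ α ∈ S, ⟪t, α⟫ = 0 := by
      intro t; rw [hTdef]; rfl
    have hTcl : IsClosedSubRS Φ T := by
      obtain ⟨t, ht, ht'⟩ := hTex
      refine ⟨⟨⟨t, (hTmem t).2 ⟨ht, ht'⟩⟩, fun x hx => hΔsub ((hTmem x).1 hx).1, ?_⟩, ?_⟩
      · intro a ha b hb
        rw [hTmem] at *
        refine ⟨hΔ.1.2.2 a ha.1 b hb.1, fun α hα => ?_⟩
        rw [reflRoot, inner_sub_left, inner_smul_left, ha.2 α hα, hb.2 α hα]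
        simp
      · intro a ha b hb hab
        rw [hTmem] at *
        refine ⟨hΔ.2 a ha.1 b hb.1 hab, fun α hα => ?_⟩
        rw [inner_add_left, ha.2 α hα, hb.2 α hα, add_zero]
    have hSN : S ⊆ strongOrth Φ T := by
      intro α hα
      refine ⟨hSΦ α hα, fun t ht => ?_⟩
      have ht' := (hTmem t).1 ht
      have h1 := ht'.2 α hα
      refine ⟨by rw [real_inner_comm]; exact h1, fun h => ?_⟩
      have h2 := (keyS α hα t ht'.1 h).1
      rw [inner_add_left, h1] at h2
      have := nn_pos (ne0 hΦ (hSΦ α hα))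
      linarith
    have hCorth : ∀ β ∈ Δ, ∀ α ∈ S, ⟪β, α⟫ ≠ 0 → ∀ t ∈ T, ⟪β, t⟫ = 0 := by
      intro β hβ α hα hβα t ht
      have ht' := (hTmem t).1 ht
      have h1 := ht'.2 α hα
      have h2 := ht'.2 _ (hSrefl α hα β hβ)
      rw [reflRoot, inner_sub_right, inner_smul_right, h1, zero_sub, neg_eq_zero] at h2
      rcases mul_eq_zero.1 h2 with h3 | h3
      · exfalso
        have h4 := pairing_mul α (ne0 hΦ (hΔsub hβ))
        rw [h3] at h4
        apply hβα
        rw [real_inner_comm]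
        linarith
      · rw [real_inner_comm]
        exact h3
    have hΔN : Δ ⊆ T ∪ strongOrth Φ T := by
      intro β hβ
      by_cases h : ∀ α ∈ S, ⟪β, α⟫ = 0
      · exact Or.inl ((hTmem β).2 ⟨hβ, h⟩)
      · right
        push Not at h
        obtain ⟨α, hα, hβα⟩ := h
        refine ⟨hΔsub hβ, fun t ht => ⟨hCorth β hβ α hα hβα t ht, fun hs1 => ?_⟩⟩
        have ht' := (hTmem t).1 ht
        have h1 := hΔ.2 β hβ t ht'.1 hs1
        have h2 := hCorth _ h1 α hα (by
          rw [inner_add_left, ht'.2 α hα, add_zero]; exact hβα) t ht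
        rw [inner_add_left, hCorth β hβ α hα hβα t ht, zero_add] at h2
        exact (nn_pos (ne0 hΦ (hΔsub ht'.1))).ne' h2
    obtain ⟨α, y, hαy, hα⟩ := hS
    have hαS : α ∈ S := (hSmem α).2 ⟨⟨y, hαy⟩, hα⟩
    have hfin := hΔmax _ (split_closed hΦ hTcl) (by
      intro h
      have h2 := split_proper hirr hTcl.1.1 h
      have := hSN hαS
      rw [h2] at this
      exact this) hΔN
    apply hα
    rw [← hfin]
    exact Or.inr (hSN hαS)

end BdS
end
end
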